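/- Let G = A₁ ∗_C A₋₁ be a word hyperbolic group which is the amalgamated free product of A₁ and A₋₁ along a virtually cyclic subgroup C, and let H be a finitely generated subgroup of G. Then H is quasiconvex in G if and only if for every g ∈ G and every i ∈ {1, −1} the subgroup g⁻¹Hg ∩ Aᵢ is quasiconvex in Aᵢ. -/

import Mathlib

universe u v w

section Defs

variable {G : Type u} [Group G]

/-- A finite generating set closed under inversion. -/
def IsSymmGen (X : Set G) : Prop :=
  X.Finite ∧ (∀ x ∈ X, x⁻¹ ∈ X) ∧ Subgroup.closure X = ⊤

/-- Word length of `g` with respect to `X`. -/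
noncomputable def wordLength (X : Set G) (g : G) : ℕ :=
  sInf {n : ℕ | ∃ l : List G, l.length = n ∧ (∀ x ∈ l, x ∈ X) ∧ l.prod = g}

/-- Word metric. -/
noncomputable def wordDist (X : Set G) (g h : G) : ℕ :=
  wordLength X (g⁻¹ * h)

/-- Gromov product with respect to the word metric. -/
noncomputable def gromovProd (X : Set G) (x y w : G) : ℝ :=
  ((wordDist X x w : ℝ) + (wordDist X y w : ℝ) - (wordDist X x y : ℝ)) / 2

end Defs

/-- A group is word hyperbolic if for some finite symmetric generating set the Gromov
product satisfies the hyperbolicity inequality. -/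
def IsWordHyperbolic (G : Type u) [Group G] : Prop :=
  ∃ X : Set G, IsSymmGen X ∧ ∃ δ : ℝ, 0 ≤ δ ∧
    ∀ x y z w : G,
      gromovProd X x z w ≥ min (gromovProd X x y w) (gromovProd X y z w) - δ

/-- A subgroup is quasiconvex: it is finitely generated and word lengths distort linearly. -/
def IsQuasiconvex {G : Type u} [Group G] (A : Subgroup G) : Prop :=
  ∃ Y : Set ↥A, IsSymmGen Y ∧ ∃ X : Set G, IsSymmGen X ∧ ∃ c : ℝ, 0 < c ∧
    ∀ a : ↥A, (wordLength Y a : ℝ) ≤ c * (wordLength X (a : G) : ℝ) + c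

/-- Property (Q): every finitely generated subgroup is quasiconvex. -/
def HasPropertyQ (G : Type u) [Group G] : Prop :=
  ∀ H : Subgroup G, H.FG → IsQuasiconvex H

/-- A group is virtually cyclic if it has a cyclic subgroup of finite index. -/
def IsVirtuallyCyclic (C : Type u) [Group C] : Prop :=
  ∃ Z : Subgroup C, IsCyclic ↥Z ∧ Z.FiniteIndex

/-- `G` is the amalgamated free product of its subgroups `A` and `B` along `C`:
`C = A ⊓ B`, `A ⊔ B = ⊤` and `G` has the pushout universal property. -/
structure IsAmalgamatedFreeProduct {G : Type u} [Group G] (A B C : Subgroup G) : Prop where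
  le_left : C ≤ A
  le_right : C ≤ B
  inf_eq : A ⊓ B = C
  sup_eq_top : A ⊔ B = ⊤
  univ : ∀ (K : Type u) [Group K] (f : ↥A →* K) (g : ↥B →* K),
    (∀ (c : G) (hA : c ∈ A) (hB : c ∈ B), f ⟨c, hA⟩ = g ⟨c, hB⟩) →
    ∃ h : G →* K, (∀ a : ↥A, h a = f a) ∧ (∀ b : ↥B, h b = g b)

section Words

variable {G : Type u} [Group G]

/-- A word over the alphabet `X`. -/
def IsWordOver (X : Set G) (l : List G) : Prop := ∀ x ∈ l, x ∈ X

/-- A geodesic word over `X`. -/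
def IsGeodesicWord (X : Set G) (l : List G) : Prop :=
  IsWordOver X l ∧ l.length = wordLength X l.prod

/-- A `lam`-quasigeodesic word over `X`: every subword `v` satisfies
`l(v) ≤ lam * l_X(v̄) + lam`. -/
def IsQuasigeodesicWord (X : Set G) (lam : ℝ) (l : List G) : Prop :=
  IsWordOver X l ∧
    ∀ v : List G, v <:+: l → (v.length : ℝ) ≤ lam * (wordLength X v.prod : ℝ) + lam

/-- `g` is a shortest element of the subset `S` with respect to `wordLength X`. -/
def ShortestIn (X : Set G) (g : G) (S : Set G) : Prop :=
  g ∈ S ∧ ∀ s ∈ S, wordLength X g ≤ wordLength X s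

end Words

/-- `G` together with `ια, ιβ` is the pushout of `ℤ → A, 1 ↦ x` and `ℤ → B, 1 ↦ y`. -/
structure IsAmalgamOverZ {A : Type u} {B : Type v} {G : Type w}
    [Group A] [Group B] [Group G]
    (ια : A →* G) (ιβ : B →* G) (x : A) (y : B) : Prop where
  comm : ια x = ιβ y
  gen : ια.range ⊔ ιβ.range = ⊤
  univ : ∀ (K : Type (max u v w)) [Group K] (f : A →* K) (g : B →* K),
    f x = g y → ∃ h : G →* K, h.comp ια = f ∧ h.comp ιβ = g

/-!
A word length on `G` makes `G` a geodesic hyperbolic space, and by stability of quasigeodesics a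
subgroup is quasiconvex exactly when geodesics between its points stay close to it. Neighbourhoods
of two such subgroups intersect close to the intersection of the subgroups, so intersections and
conjugates of quasiconvex subgroups are quasiconvex.

Conversely, a geodesic word for `h ∈ H` passes through the cosets of `C` prescribed by the normal
form of `h`. At each of these points it is `a * s * c` with `a ∈ H`, `c ∈ C` and `s` in a fixed
finite set. Two consecutive points differ by an element of a factor, so that `a⁻¹ * a'` lies in a
double coset of `s (A i) s⁻¹ ∩ H`, which is undistorted, and its length is controlled by the step
and by the lengths of `c` and `c'`. The latter are bounded if `C` meets `s⁻¹ H s` in an infinite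
group, because this intersection has finite index in `C`. Otherwise `c` is bounded by the length
of the step, unless the step lies in the elementary hull `E` of `C`. Since `C` has finite index in
`E`, only boundedly many consecutive steps can lie in `E`, and the bounds sum up to a multiple of
the length of `h`.
-/

section

open scoped Pointwise

variable {G : Type*} [Group G]

/-! ### Word lengths -/

section WordLength

variable {Y : Set G}

theorem wordLength_prod_le {l : List G} (hl : IsWordOver Y l) : wordLength Y l.prod ≤ l.length :=
  Nat.sInf_le ⟨l, rfl, hl, rfl⟩

theorem wordLength_one (Y : Set G) : wordLength Y 1 = 0 :=
  Nat.le_zero.1 (wordLength_prod_le (l := []) (List.forall_mem_nil _))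

theorem isSymmGen_union_inv (hfin : Y.Finite) (hgen : Subgroup.closure Y = ⊤) :
    IsSymmGen (Y ∪ Y⁻¹) :=
  ⟨hfin.union hfin.inv, fun y hy => hy.symm.imp id (by simp),
    by rw [Subgroup.closure_union, Subgroup.closure_inv, sup_idem, hgen]⟩

theorem exists_isSymmGen_of_fg (hG : Group.FG G) : ∃ Y : Set G, IsSymmGen Y := by
  obtain ⟨S, hS, hfin⟩ := Group.fg_iff.1 hG
  exact ⟨_, isSymmGen_union_inv hfin hS⟩

namespace IsSymmGen

theorem group_fg (hY : IsSymmGen Y) : Group.FG G :=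
  Group.fg_iff.2 ⟨Y, hY.2.2, hY.1⟩

theorem exists_isGeodesicWord (hY : IsSymmGen Y) (g : G) :
    ∃ l : List G, IsGeodesicWord Y l ∧ l.prod = g := by
  have hg : g ∈ (Subgroup.closure Y).toSubmonoid := by simp [hY.2.2]
  rw [Subgroup.closure_toSubmonoid] at hg
  obtain ⟨l, hl, hlg⟩ := Submonoid.exists_list_of_mem_closure hg
  have hlY : IsWordOver Y l := fun x hx =>
    (hl x hx).elim id fun h => by simpa using hY.2.1 _ h
  obtain ⟨m, hm, hmY, rfl⟩ := Nat.sInf_mem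
    (s := {n : ℕ | ∃ l : List G, l.length = n ∧ (∀ x ∈ l, x ∈ Y) ∧ l.prod = g})
    ⟨_, l, rfl, hlY, hlg⟩
  exact ⟨m, ⟨hmY, hm⟩, rfl⟩

theorem wordLength_eq_zero_iff (hY : IsSymmGen Y) {g : G} : wordLength Y g = 0 ↔ g = 1 := by
  refine ⟨fun h => ?_, by rintro rfl; exact wordLength_one Y⟩
  obtain ⟨l, hl, rfl⟩ := hY.exists_isGeodesicWord g
  rw [List.eq_nil_of_length_eq_zero (hl.2.trans h), List.prod_nil]

theorem wordLength_mul_le (hY : IsSymmGen Y) (g h : G) :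
    wordLength Y (g * h) ≤ wordLength Y g + wordLength Y h := by
  obtain ⟨l, hl, rfl⟩ := hY.exists_isGeodesicWord g
  obtain ⟨m, hm, rfl⟩ := hY.exists_isGeodesicWord h
  rw [← hl.2, ← hm.2, ← List.prod_append, ← List.length_append]
  exact wordLength_prod_le (List.forall_mem_append.2 ⟨hl.1, hm.1⟩)

theorem wordLength_inv_le (hY : IsSymmGen Y) (g : G) : wordLength Y g⁻¹ ≤ wordLength Y g := by
  obtain ⟨l, hl, rfl⟩ := hY.exists_isGeodesicWord g
  have hinv : IsWordOver Y (l.map (·⁻¹)).reverse := fun x hx => by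
    obtain ⟨y, hy, rfl⟩ := List.mem_map.1 (List.mem_reverse.1 hx)
    exact hY.2.1 y (hl.1 y hy)
  calc wordLength Y l.prod⁻¹ = wordLength Y (l.map (·⁻¹)).reverse.prod := by
        rw [List.prod_inv_reverse]
    _ ≤ (l.map (·⁻¹)).reverse.length := wordLength_prod_le hinv
    _ = wordLength Y l.prod := by rw [List.length_reverse, List.length_map, hl.2]

theorem wordLength_inv (hY : IsSymmGen Y) (g : G) : wordLength Y g⁻¹ = wordLength Y g :=
  le_antisymm (hY.wordLength_inv_le g) (by simpa using hY.wordLength_inv_le g⁻¹)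

theorem exists_wordLength_split (hY : IsSymmGen Y) (g : G) {t : ℕ} (ht : t ≤ wordLength Y g) :
    ∃ a, wordLength Y a = t ∧ t + wordLength Y (a⁻¹ * g) = wordLength Y g := by
  obtain ⟨l, hl, rfl⟩ := hY.exists_isGeodesicWord g
  have htake := wordLength_prod_le fun x hx => hl.1 x (List.mem_of_mem_take (i := t) hx)
  have hdrop := wordLength_prod_le fun x hx => hl.1 x (List.mem_of_mem_drop (i := t) hx)
  have hmul := hY.wordLength_mul_le (l.take t).prod (l.drop t).prod
  have hprod : (l.take t).prod * (l.drop t).prod = l.prod := List.prod_take_mul_prod_drop l t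
  rw [hprod] at hmul
  rw [List.length_take] at htake
  rw [List.length_drop] at hdrop
  have hlen := hl.2
  refine ⟨(l.take t).prod, by omega, ?_⟩
  rw [← eq_inv_mul_of_mul_eq hprod]
  omega

theorem finite_wordLength_le (hY : IsSymmGen Y) (n : ℕ) : {g | wordLength Y g ≤ n}.Finite := by
  induction n with
  | zero =>
    simp only [Nat.le_zero, hY.wordLength_eq_zero_iff, Set.ofPred_eq_eq_singleton,
      Set.finite_singleton]
  | succ n ih =>
    refine ((Set.finite_singleton 1).union (hY.1.mul ih)).subset fun g hg => ?_
    obtain ⟨l, hl, rfl⟩ := hY.exists_isGeodesicWord g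
    rw [Set.mem_ofPred_eq, ← hl.2] at hg
    cases l with
    | nil => exact Or.inl List.prod_nil
    | cons a l =>
      have ha : a ∈ Y := hl.1 a List.mem_cons_self
      have hlY : IsWordOver Y l := fun x hx => hl.1 x (List.mem_cons_of_mem a hx)
      refine Or.inr ⟨a, ha, l.prod, (wordLength_prod_le hlY).trans ?_, List.prod_cons.symm⟩
      simpa using hg

theorem exists_le_mul_wordLength (hY : IsSymmGen Y) {ℓ : G → ℕ} (hone : ℓ 1 = 0)
    (hmul : ∀ g h, ℓ (g * h) ≤ ℓ g + ℓ h) : ∃ M, ∀ g, ℓ g ≤ M * wordLength Y g := by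
  obtain ⟨M, hM⟩ := (hY.1.image ℓ).bddAbove
  refine ⟨M, fun g => ?_⟩
  obtain ⟨l, hl, rfl⟩ := hY.exists_isGeodesicWord g
  rw [← hl.2]
  have hlM : ∀ x ∈ l, ℓ x ≤ M := fun x hx => hM ⟨x, hl.1 x hx, rfl⟩
  clear hl
  induction l with
  | nil => simp [hone]
  | cons a l ih =>
    rw [List.forall_mem_cons] at hlM
    rw [List.prod_cons, List.length_cons, Nat.mul_succ, add_comm]
    exact (hmul _ _).trans (add_le_add hlM.1 (ih hlM.2))

end IsSymmGen

end WordLength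

/-! ### Hyperbolic length functions -/

section Length

/-- The left-invariant distance attached to a length function `L`. -/
def ldist (L : G → ℕ) (x y : G) : ℕ := L (x⁻¹ * y)

/-- `x` lies on a geodesic from `a` to `b` for the distance `ldist L`. -/
def IsBetween (L : G → ℕ) (a x b : G) : Prop := ldist L a x + ldist L x b = ldist L a b

/-- The point `x` lies in the closed `R`-neighbourhood of the subgroup `P`. -/
def Near (L : G → ℕ) (R : ℕ) (P : Subgroup G) (x : G) : Prop := ∃ p ∈ P, ldist L x p ≤ R

/-- Quasiconvexity of `P` as a subset of a geodesic space: geodesics joining points of `P` stay in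
a uniform neighbourhood of `P`. By left invariance one endpoint may be taken to be `1`. -/
def IsGeodesicallyQuasiconvex (L : G → ℕ) (P : Subgroup G) : Prop :=
  ∃ R, ∀ p ∈ P, ∀ x, IsBetween L 1 x p → Near L R P x

/-- A length function whose left-invariant distance is a proper and discretely geodesic metric. -/
structure IsGeodesicLength (L : G → ℕ) : Prop where
  eq_zero_iff : ∀ {g}, L g = 0 ↔ g = 1
  inv : ∀ g, L g⁻¹ = L g
  mul_le : ∀ g h, L (g * h) ≤ L g + L h
  finite_ball : ∀ n, {g | L g ≤ n}.Finite
  exists_split : ∀ g, ∀ t ≤ L g, ∃ a, L a = t ∧ t + L (a⁻¹ * g) = L g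

/-- A geodesic length function whose distance is Gromov hyperbolic; `D` is the constant of the
four-point condition, stated without Gromov products so as to stay in `ℕ`. -/
structure IsHyperbolicLength (L : G → ℕ) (D : ℕ) : Prop extends IsGeodesicLength L where
  four_point : ∀ x y z w, ldist L x z + ldist L y w ≤
    max (ldist L x y + ldist L z w) (ldist L y z + ldist L x w) + D

theorem IsSymmGen.isGeodesicLength {X : Set G} (hX : IsSymmGen X) :
    IsGeodesicLength (wordLength X) where
  eq_zero_iff := hX.wordLength_eq_zero_iff
  inv := hX.wordLength_inv
  mul_le := hX.wordLength_mul_le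
  finite_ball := hX.finite_wordLength_le
  exists_split g _ ht := hX.exists_wordLength_split g ht

theorem IsSymmGen.exists_isHyperbolicLength {X : Set G} (hX : IsSymmGen X) {δ : ℝ}
    (hδ : ∀ x y z w : G,
      gromovProd X x z w ≥ min (gromovProd X x y w) (gromovProd X y z w) - δ) :
    ∃ D, IsHyperbolicLength (wordLength X) D := by
  obtain ⟨D, hD⟩ := exists_nat_ge (2 * δ)
  refine ⟨D, hX.isGeodesicLength, fun x y z w => ?_⟩
  change wordDist X x z + wordDist X y w ≤
    max (wordDist X x y + wordDist X z w) (wordDist X y z + wordDist X x w) + D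
  have h := hδ x y z w
  rcases min_choice (gromovProd X x y w) (gromovProd X y z w) with hmin | hmin <;>
    rw [hmin] at h <;> unfold gromovProd at h
  · refine le_trans ?_ (Nat.add_le_add_right (le_max_left _ _) D)
    exact_mod_cast (by linarith : (wordDist X x z : ℝ) + wordDist X y w ≤
      wordDist X x y + wordDist X z w + D)
  · refine le_trans ?_ (Nat.add_le_add_right (le_max_right _ _) D)
    exact_mod_cast (by linarith : (wordDist X x z : ℝ) + wordDist X y w ≤
      wordDist X y z + wordDist X x w + D)

variable {L : G → ℕ}

theorem ldist_mul_left (L : G → ℕ) (g x y : G) : ldist L (g * x) (g * y) = ldist L x y := by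
  unfold ldist; congr 1; group

theorem ldist_one_left (L : G → ℕ) (x : G) : ldist L 1 x = L x := by simp [ldist]

theorem isBetween_mul_left {g a x b : G} :
    IsBetween L (g * a) (g * x) (g * b) ↔ IsBetween L a x b := by
  simp only [IsBetween, ldist_mul_left]

theorem IsBetween.ldist_le {a x b : G} (h : IsBetween L a x b) : ldist L a x ≤ ldist L a b :=
  Nat.le.intro h

namespace IsGeodesicLength

theorem one (hL : IsGeodesicLength L) : L 1 = 0 := hL.eq_zero_iff.2 rfl

theorem ldist_comm (hL : IsGeodesicLength L) (x y : G) : ldist L x y = ldist L y x := by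
  unfold ldist; rw [← hL.inv]; congr 1; group

theorem ldist_triangle (hL : IsGeodesicLength L) (x y z : G) :
    ldist L x z ≤ ldist L x y + ldist L y z :=
  calc L (x⁻¹ * z) = L ((x⁻¹ * y) * (y⁻¹ * z)) := by congr 1; group
    _ ≤ L (x⁻¹ * y) + L (y⁻¹ * z) := hL.mul_le _ _

theorem ldist_self (hL : IsGeodesicLength L) (x : G) : ldist L x x = 0 := by
  rw [ldist, inv_mul_cancel, hL.one]

theorem eq_of_ldist_eq_zero (hL : IsGeodesicLength L) {x y : G} (h : ldist L x y = 0) : x = y :=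
  inv_mul_eq_one.1 (hL.eq_zero_iff.1 h)

theorem finite_ldist_le (hL : IsGeodesicLength L) (a : G) (r : ℕ) : {x | ldist L a x ≤ r}.Finite :=
  (hL.finite_ball r).preimage (mul_right_injective a⁻¹).injOn

theorem isBetween_symm (hL : IsGeodesicLength L) {a x b : G} (h : IsBetween L a x b) :
    IsBetween L b x a := by
  unfold IsBetween at *
  rw [hL.ldist_comm b x, hL.ldist_comm x a, hL.ldist_comm b a]; omega

theorem exists_isBetween (hL : IsGeodesicLength L) (a b : G) {t : ℕ} (ht : t ≤ ldist L a b) :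
    ∃ x, IsBetween L a x b ∧ ldist L a x = t := by
  obtain ⟨y, hy, hsum⟩ := hL.exists_split _ t ht
  have hay : ldist L a (a * y) = t := by simpa [ldist] using hy
  have hyb : ldist L (a * y) b = L (y⁻¹ * (a⁻¹ * b)) := by unfold ldist; congr 1; group
  exact ⟨a * y, by rw [IsBetween, hay, hyb, hsum, ldist], hay⟩

theorem eq_of_isBetween_self (hL : IsGeodesicLength L) {a x : G} (h : IsBetween L a x a) :
    x = a := by
  rw [IsBetween, hL.ldist_self] at h
  exact (hL.eq_of_ldist_eq_zero (by omega : ldist L a x = 0)).symm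

theorem isBetween_trans_left (hL : IsGeodesicLength L) {a y x b : G} (h : IsBetween L a x b)
    (h' : IsBetween L a y x) : IsBetween L a y b ∧ IsBetween L y x b := by
  unfold IsBetween at *
  have := hL.ldist_triangle y x b
  have := hL.ldist_triangle a y b
  omega

end IsGeodesicLength

end Length

/-! ### Stability of quasigeodesics -/

section Morse

variable {L : G → ℕ} {D : ℕ}

namespace IsHyperbolicLength

theorem ldist_le_of_isBetween_of_isBetween (hL : IsHyperbolicLength L D)
    {a b a' b' x x' : G} {s : ℕ} (h : IsBetween L a x b) (h' : IsBetween L a' x' b')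
    (heq : ldist L a x = ldist L a' x') (ha : ldist L a a' ≤ s) (hb : ldist L b b' ≤ s) :
    ldist L x x' ≤ 3 * s + D := by
  unfold IsBetween at *
  have := hL.four_point a x b x'
  have := hL.ldist_triangle b b' x'
  have := hL.ldist_comm b' x'
  have := hL.ldist_triangle a' a b'
  have := hL.ldist_triangle a b b'
  have := hL.ldist_comm a a'
  have := hL.ldist_triangle a a' x'
  omega

theorem exists_isBetween_near_of_le (hL : IsHyperbolicLength L D) {a c x : G} {s : ℕ}
    (h : ldist L a x + ldist L x c ≤ ldist L a c + s) :
    ∃ y, IsBetween L a y c ∧ ldist L x y ≤ D + s := by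
  obtain ⟨y, hy, hay⟩ := hL.exists_isBetween a c (min_le_right (ldist L a x) _)
  refine ⟨y, hy, ?_⟩
  have := hL.four_point a x c y
  have := hL.ldist_comm c y
  have := hL.ldist_comm c x
  have := hL.ldist_triangle a x c
  unfold IsBetween at hy
  omega

theorem slim_triangle (hL : IsHyperbolicLength L D) {a b x : G} (h : IsBetween L a x b) (c : G) :
    ∃ y, (IsBetween L a y c ∨ IsBetween L c y b) ∧ ldist L x y ≤ 2 * D := by
  have hfour := hL.four_point a x b c
  have := hL.ldist_comm c x
  have := hL.ldist_comm b c
  unfold IsBetween at h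
  have hcase : ldist L c x + ldist L x b ≤ ldist L c b + D ∨
      ldist L a x + ldist L x c ≤ ldist L a c + D := by omega
  rcases hcase with hcb | hac
  · obtain ⟨y, hy, hxy⟩ := hL.exists_isBetween_near_of_le hcb
    exact ⟨y, Or.inr hy, by omega⟩
  · obtain ⟨y, hy, hxy⟩ := hL.exists_isBetween_near_of_le hac
    exact ⟨y, Or.inl hy, by omega⟩

theorem slim_quadrilateral (hL : IsHyperbolicLength L D) {a b x : G} (h : IsBetween L a x b)
    (c d : G) :
    ∃ y, (IsBetween L a y c ∨ IsBetween L c y d ∨ IsBetween L d y b) ∧ ldist L x y ≤ 4 * D := by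
  obtain ⟨y, hy | hy, hxy⟩ := hL.slim_triangle h c
  · exact ⟨y, Or.inl hy, by omega⟩
  · obtain ⟨z, hz, hyz⟩ := hL.slim_triangle hy d
    exact ⟨z, Or.inr hz, by have := hL.ldist_triangle x y z; omega⟩

theorem exists_near_path (hL : IsHyperbolicLength L D) {M : ℕ} (k : ℕ) :
    ∀ (f : ℕ → G) (n : ℕ), n ≤ 2 ^ k → (∀ i < n, ldist L (f i) (f (i + 1)) ≤ M) →
      ∀ x, IsBetween L (f 0) x (f n) → ∃ i ≤ n, ldist L x (f i) ≤ 2 * D * k + M := by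
  induction k with
  | zero =>
    intro f n hn hf x hx
    refine ⟨0, Nat.zero_le n, ?_⟩
    rw [hL.ldist_comm]
    refine hx.ldist_le.trans ?_
    rcases Nat.le_one_iff_eq_zero_or_eq_one.1 hn with rfl | rfl
    · simp [hL.ldist_self]
    · simpa using hf 0 one_pos
  | succ k ih =>
    intro f n hn hf x hx
    rw [pow_succ] at hn
    have hsucc : 2 * D * (k + 1) = 2 * D * k + 2 * D := Nat.mul_succ _ _
    obtain ⟨y, hy | hy, hxy⟩ := hL.slim_triangle hx (f (n / 2))
    · obtain ⟨i, hi, hyi⟩ := ih f (n / 2) (by omega) (fun i hi => hf i (by omega)) y hy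
      have := hL.ldist_triangle x y (f i)
      exact ⟨i, by omega, by omega⟩
    · obtain ⟨i, hi, hyi⟩ := ih (fun j => f (n / 2 + j)) (n - n / 2) (by omega)
        (fun i hi => hf (n / 2 + i) (by omega)) y
        (by simpa [Nat.add_sub_cancel' (Nat.div_le_self n 2)] using hy)
      have := hL.ldist_triangle x y (f (n / 2 + i))
      exact ⟨n / 2 + i, by omega, by omega⟩

end IsHyperbolicLength

theorem exists_bound_of_two_pow_le_linear (a b : ℕ) :
    ∃ K : ℕ, ∀ k : ℕ, 2 ^ k ≤ a * k + b → k ≤ K := by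
  have hlim : Filter.Tendsto
      (fun k : ℕ => (a : ℝ) * ((k : ℝ) ^ 1 / 2 ^ k) + b * ((k : ℝ) ^ 0 / 2 ^ k)) Filter.atTop
      (nhds ((a : ℝ) * 0 + b * 0)) :=
    ((tendsto_pow_const_div_const_pow_of_one_lt 1 one_lt_two).const_mul _).add
      ((tendsto_pow_const_div_const_pow_of_one_lt 0 one_lt_two).const_mul _)
  obtain ⟨K, hK⟩ := Filter.eventually_atTop.1 (hlim.eventually_lt_const (by norm_num :
    (a : ℝ) * 0 + b * 0 < 1))
  refine ⟨K, fun k hk => ?_⟩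
  by_contra! hlt
  have hlt_one := hK k hlt.le
  rw [pow_one, pow_zero, ← mul_div_assoc, ← mul_div_assoc, ← add_div, mul_one,
    div_lt_one (by positivity)] at hlt_one
  exact hlt_one.not_ge (by exact_mod_cast hk)

theorem exists_bound_of_le_clog (a b c : ℕ) :
    ∃ R : ℕ, ∀ r : ℕ, r ≤ a * Nat.clog 2 (b * r + b) + c → r ≤ R := by
  obtain ⟨K, hK⟩ := exists_bound_of_two_pow_le_linear (b * a) (b * (a + c) + b + 1)
  refine ⟨a * (K + 1) + c, fun r hr => hr.trans ?_⟩
  gcongr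
  by_contra! hlt
  obtain ⟨k, hk⟩ : ∃ k, Nat.clog 2 (b * r + b) = k + 1 := ⟨_, (Nat.succ_pred (by omega)).symm⟩
  have hpow : 2 ^ k < b * r + b := (Nat.lt_clog_iff_pow_lt one_lt_two).1 (by omega)
  have hbr : b * r ≤ b * (a * (k + 1) + c) := Nat.mul_le_mul_left b (hk ▸ hr)
  have := hK k (by nlinarith)
  omega

namespace IsGeodesicLength

theorem exists_farthest (hL : IsGeodesicLength L) {F : Set G} {a : G} (ha : a ∈ F) (b : G) :
    ∃ r x, IsBetween L a x b ∧ (∀ p ∈ F, r ≤ ldist L x p) ∧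
      ∀ y, IsBetween L a y b → ∃ p ∈ F, ldist L y p ≤ r := by
  classical
  have hex : ∃ r, ∀ y, IsBetween L a y b → ∃ p ∈ F, ldist L y p ≤ r :=
    ⟨ldist L a b, fun y hy => ⟨a, ha, by rw [hL.ldist_comm]; exact hy.ldist_le⟩⟩
  rcases Nat.eq_zero_or_pos (Nat.find hex) with hzero | hpos
  · exact ⟨0, a, by simp [IsBetween, hL.ldist_self], fun _ _ => Nat.zero_le _,
      hzero ▸ Nat.find_spec hex⟩
  · have hmin := Nat.find_min hex (Nat.pred_lt hpos.ne')
    push Not at hmin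
    obtain ⟨x, hx, hfar⟩ := hmin
    exact ⟨_, x, hx, fun p hp => Nat.le_of_pred_lt (hfar p hp), Nat.find_spec hex⟩

theorem exists_detour (hL : IsGeodesicLength L) {F : Set G} {e x : G} {r : ℕ} (he : e ∈ F)
    (hfar : ∀ p ∈ F, r ≤ ldist L x p) (hnear : ∀ y, IsBetween L e y x → ∃ p ∈ F, ldist L y p ≤ r) :
    ∃ y, ∃ p ∈ F, IsBetween L e y x ∧ ldist L y x ≤ 2 * r ∧ ldist L y p ≤ r ∧
      ∀ w, IsBetween L y w p → r ≤ ldist L x w := by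
  rcases le_total (ldist L e x) (2 * r) with hle | hge
  · refine ⟨e, e, he, by simp [IsBetween, hL.ldist_self], hle, by simp [hL.ldist_self],
      fun w hw => ?_⟩
    rw [hL.eq_of_isBetween_self hw]
    exact hfar e he
  · obtain ⟨y, hy, hey⟩ := hL.exists_isBetween e x (t := ldist L e x - 2 * r) (by omega)
    obtain ⟨p, hp, hyp⟩ := hnear y hy
    have hyx : ldist L y x = 2 * r := by unfold IsBetween at hy; omega
    refine ⟨y, p, hp, hy, hyx.le, hyp, fun w hw => ?_⟩
    have := hL.ldist_triangle y w x
    have := hw.ldist_le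
    have := hL.ldist_comm w x
    omega

end IsGeodesicLength

theorem IsHyperbolicLength.exists_isBetween_near_of_far (hL : IsHyperbolicLength L D) {F : Set G}
    {a b x : G} {r : ℕ} (ha : a ∈ F) (hb : b ∈ F) (hx : IsBetween L a x b)
    (hfar : ∀ p ∈ F, r ≤ ldist L x p) (hnear : ∀ y, IsBetween L a y b → ∃ p ∈ F, ldist L y p ≤ r)
    (hr : 4 * D < r) :
    ∃ p ∈ F, ∃ q ∈ F, ldist L p q ≤ 6 * r ∧ ∃ w, IsBetween L p w q ∧ ldist L x w ≤ 4 * D := by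
  obtain ⟨y, p, hp, hy, hyx, hyp, hdetour_left⟩ := hL.exists_detour ha hfar fun y hy =>
    hnear y (hL.isBetween_trans_left hx hy).1
  obtain ⟨z, q, hq, hz, hzx, hzq, hdetour_right⟩ := hL.exists_detour hb hfar fun y hy =>
    hnear y (hL.isBetween_symm (hL.isBetween_trans_left (hL.isBetween_symm hx) hy).1)
  have hbxy : IsBetween L b x y := hL.isBetween_symm (hL.isBetween_trans_left hx hy).2
  have hyxz : IsBetween L y x z := hL.isBetween_symm (hL.isBetween_trans_left hbxy hz).2
  obtain ⟨w, hw, hxw⟩ := hL.slim_quadrilateral hyxz p q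
  refine ⟨p, hp, q, hq, ?_, w, ?_, hxw⟩
  · have := hL.ldist_triangle p y q
    have := hL.ldist_triangle y x q
    have := hL.ldist_triangle x z q
    have := hL.ldist_comm p y
    have := hL.ldist_comm z x
    omega
  · rcases hw with hw | hw | hw
    · have := hdetour_left w hw; omega
    · exact hw
    · have := hdetour_right w (hL.isBetween_symm hw); omega

/-- The sequence `f 0, …, f n` is a discrete quasigeodesic with jumps of size at most `M`. -/
structure IsQuasigeodesicPath (L : G → ℕ) (K M : ℕ) (f : ℕ → G) (n : ℕ) : Prop where
  ldist_succ_le : ∀ i < n, ldist L (f i) (f (i + 1)) ≤ M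
  sub_le : ∀ i j, i ≤ j → j ≤ n → j - i ≤ K * ldist L (f i) (f j) + K

namespace IsHyperbolicLength

theorem exists_near_subpath (hL : IsHyperbolicLength L D) {K M n : ℕ} {f : ℕ → G}
    (hf : IsQuasigeodesicPath L K M f n) {i j : ℕ} (hi : i ≤ n) (hj : j ≤ n) {w : G}
    (hw : IsBetween L (f i) w (f j)) :
    ∃ m ≤ n, ldist L w (f m) ≤ 2 * D * Nat.clog 2 (K * ldist L (f i) (f j) + K) + M := by
  wlog hij : i ≤ j generalizing i j
  · rw [hL.ldist_comm (f i)]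
    exact this hj hi (hL.isBetween_symm hw) (le_of_not_ge hij)
  obtain ⟨m, hm, hwm⟩ := hL.exists_near_path _ (fun t => f (i + t)) (j - i)
    ((hf.sub_le i j hij hj).trans (Nat.le_pow_clog one_lt_two _))
    (fun t ht => hf.ldist_succ_le (i + t) (by omega)) w
    (by simpa [Nat.add_sub_cancel' hij] using hw)
  exact ⟨i + m, by omega, hwm⟩

theorem morse (hL : IsHyperbolicLength L D) (K M : ℕ) :
    ∃ R, ∀ f n, IsQuasigeodesicPath L K M f n →
      ∀ x, IsBetween L (f 0) x (f n) → ∃ i ≤ n, ldist L x (f i) ≤ R := by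
  obtain ⟨R, hR⟩ := exists_bound_of_le_clog (2 * D) (6 * K) (4 * D + M)
  refine ⟨max R (4 * D), fun f n hf => ?_⟩
  have hmem : ∀ i ≤ n, f i ∈ f '' Set.Iic n := fun i hi => ⟨i, hi, rfl⟩
  obtain ⟨r, x, hx, hfar, hnear⟩ := hL.exists_farthest (hmem 0 n.zero_le) (f n)
  suffices hr : r ≤ max R (4 * D) by
    intro y hy
    obtain ⟨_, ⟨i, hi, rfl⟩, hyi⟩ := hnear y hy
    exact ⟨i, hi, hyi.trans hr⟩
  by_contra! hlt
  obtain ⟨_, ⟨i, hi, rfl⟩, _, ⟨j, hj, rfl⟩, hij, w, hw, hxw⟩ := hL.exists_isBetween_near_of_far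
    (hmem 0 n.zero_le) (hmem n le_rfl) hx hfar hnear (lt_of_le_of_lt (le_max_right _ _) hlt)
  obtain ⟨m, hm, hwm⟩ := hL.exists_near_subpath hf hi hj hw
  have hclog : Nat.clog 2 (K * ldist L (f i) (f j) + K) ≤ Nat.clog 2 (6 * K * r + 6 * K) :=
    Nat.clog_mono_right 2 (by nlinarith [Nat.mul_le_mul_left K hij])
  have hxm := hfar _ (hmem m hm)
  have htri := hL.ldist_triangle x w (f m)
  have hrR := hR r (by nlinarith [Nat.mul_le_mul_left (2 * D) hclog])
  omega

end IsHyperbolicLength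

end Morse

/-! ### Undistorted subgroups -/

section DominatesWordLength

variable {K K' : Type*} [Group K] [Group K']

/-- The group `K` is finitely generated and its word length is bounded above by an affine function
of `ℓ`. When `ℓ` is the restriction of a length function on a larger group, this says that `K` is
undistorted there. -/
def DominatesWordLength (ℓ : K → ℕ) : Prop :=
  ∃ Y : Set K, IsSymmGen Y ∧ ∃ c, ∀ k, wordLength Y k ≤ c * ℓ k + c

namespace DominatesWordLength

theorem of_words {ℓ : K → ℕ} {S : Set K} (hS : S.Finite) (c : ℕ)
    (hwords : ∀ k, ∃ l : List K, IsWordOver S l ∧ l.length ≤ c * ℓ k + c ∧ l.prod = k) :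
    DominatesWordLength ℓ := by
  refine ⟨S ∪ S⁻¹, isSymmGen_union_inv hS (Subgroup.eq_top_iff' _ |>.2 fun k => ?_), c,
    fun k => ?_⟩ <;> obtain ⟨l, hl, hlen, rfl⟩ := hwords k
  · exact Subgroup.list_prod_mem _ fun x hx => Subgroup.subset_closure (hl x hx)
  · exact (wordLength_prod_le fun x hx => Or.inl (hl x hx)).trans hlen

theorem of_surjective {ℓ : K → ℕ} {ℓ' : K' → ℕ} (h : DominatesWordLength ℓ) {f : K →* K'}
    (hf : Function.Surjective f) {c : ℕ} (hc : ∀ k, ℓ k ≤ c * ℓ' (f k) + c) :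
    DominatesWordLength ℓ' := by
  obtain ⟨Y, hY, d, hd⟩ := h
  refine of_words (hY.1.image f) (d * c + d) fun k' => ?_
  obtain ⟨k, rfl⟩ := hf k'
  obtain ⟨l, hl, rfl⟩ := hY.exists_isGeodesicWord k
  refine ⟨l.map f, fun x hx => ?_, ?_, (map_list_prod f l).symm⟩
  · obtain ⟨y, hy, rfl⟩ := List.mem_map.1 hx
    exact ⟨y, hl.1 y hy, rfl⟩
  · calc (l.map f).length = wordLength Y l.prod := by rw [List.length_map, hl.2]
      _ ≤ d * (c * ℓ' (f l.prod) + c) + d := (hd _).trans (by gcongr; exact hc _)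
      _ ≤ (d * c + d) * ℓ' (f l.prod) + (d * c + d) := by
        rw [add_mul, mul_add, mul_assoc]; omega

theorem of_finite [Finite K] (ℓ : K → ℕ) : DominatesWordLength ℓ :=
  of_words Set.finite_univ 1 fun k =>
    ⟨[k], fun _ _ => Set.mem_univ _, by simp, List.prod_singleton⟩

end DominatesWordLength

/-- The subgroup `P` is finitely generated and undistorted with respect to `L`. -/
def IsUndistorted (L : G → ℕ) (P : Subgroup G) : Prop :=
  DominatesWordLength fun p : P => L p

theorem IsUndistorted.group_fg {L : G → ℕ} {P : Subgroup G} (hP : IsUndistorted L P) :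
    Group.FG P :=
  let ⟨_, hY, _⟩ := hP
  hY.group_fg

theorem isQuasiconvex_iff_isUndistorted {X : Set G} (hX : IsSymmGen X) {P : Subgroup G} :
    IsQuasiconvex P ↔ IsUndistorted (wordLength X) P := by
  constructor
  · rintro ⟨Y, hY, Z, hZ, c, -, hle⟩
    obtain ⟨M, hM⟩ := hX.exists_le_mul_wordLength (wordLength_one Z) hZ.wordLength_mul_le
    refine ⟨Y, hY, ⌈c⌉₊ * (M + 1), fun p => ?_⟩
    have hceil : wordLength Y p ≤ ⌈c⌉₊ * wordLength Z p + ⌈c⌉₊ := by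
      have hcast : (wordLength Y p : ℝ) ≤ ⌈c⌉₊ * wordLength Z p + ⌈c⌉₊ :=
        (hle p).trans (by gcongr <;> exact Nat.le_ceil c)
      exact_mod_cast hcast
    nlinarith [Nat.mul_le_mul_left ⌈c⌉₊ (hM p), Nat.zero_le (⌈c⌉₊ * wordLength X p),
      Nat.zero_le (⌈c⌉₊ * M)]
  · rintro ⟨Y, hY, c, hle⟩
    refine ⟨Y, hY, X, hX, c + 1, by positivity, fun p => ?_⟩
    have hcast : (wordLength Y p : ℝ) ≤ c * wordLength X (p : G) + c := by exact_mod_cast hle p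
    nlinarith [Nat.cast_nonneg (α := ℝ) (wordLength X (p : G))]

end DominatesWordLength

section Quasiconvexity

variable {L : G → ℕ} {D : ℕ} {P Q : Subgroup G}

theorem list_prod_range_inv_mul (f : ℕ → G) (n : ℕ) :
    ((List.range n).map fun i => (f i)⁻¹ * f (i + 1)).prod = (f 0)⁻¹ * f n := by
  induction n with
  | zero => simp
  | succ n ih => rw [List.prod_range_succ, ih]; group

theorem Near.of_ldist_le (hL : IsGeodesicLength L) {R S : ℕ} {x y : G} (hy : Near L R P y)
    (hxy : ldist L x y ≤ S) : Near L (S + R) P x := by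
  obtain ⟨p, hp, hyp⟩ := hy
  exact ⟨p, hp, (hL.ldist_triangle x y p).trans (add_le_add hxy hyp)⟩

theorem exists_bounded_witness {ι α : Type*} {S : Set ι} (hS : S.Finite) (p : ι → α → Prop)
    (ℓ : α → ℕ) : ∃ B, ∀ i ∈ S, ∀ a, p i a → ∃ b, p i b ∧ ℓ b ≤ B := by
  refine ((Filter.eventually_all_finite hS (l := Filter.atTop)).2 fun i _ => ?_).exists
  by_cases h : ∃ b, p i b
  · obtain ⟨b, hb⟩ := h
    filter_upwards [Filter.eventually_ge_atTop (ℓ b)] with B hB a _ using ⟨b, hb, hB⟩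
  · exact Filter.Eventually.of_forall fun B a ha => (h ⟨a, ha⟩).elim

namespace IsGeodesicLength

theorem exists_geodesic (hL : IsGeodesicLength L) (a b : G) :
    ∃ f : ℕ → G, f 0 = a ∧ f (ldist L a b) = b ∧
      (∀ i < ldist L a b, ldist L (f i) (f (i + 1)) = 1) ∧
      ∀ i ≤ ldist L a b, IsBetween L a (f i) b := by
  induction hn : ldist L a b generalizing a with
  | zero =>
    obtain rfl := hL.eq_of_ldist_eq_zero hn
    exact ⟨fun _ => a, rfl, rfl, by simp, fun _ _ => by simp [IsBetween, hL.ldist_self]⟩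
  | succ n ih =>
    obtain ⟨x, hx, hax⟩ := hL.exists_isBetween a b (t := 1) (by omega)
    obtain ⟨f, hf0, hfn, hstep, hf⟩ := ih x (by unfold IsBetween at hx; omega)
    refine ⟨fun i => Nat.casesOn i a f, rfl, hfn, fun i hi => ?_, fun i hi => ?_⟩ <;>
      rcases i with _ | i
    · simpa [hf0] using hax
    · exact hstep i (by omega)
    · simp [IsBetween, hL.ldist_self]
    · exact hL.isBetween_symm
        (hL.isBetween_trans_left (hL.isBetween_symm hx) (hL.isBetween_symm (hf i (by omega)))).1

theorem isUndistorted_of_isGeodesicallyQuasiconvex (hL : IsGeodesicLength L)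
    (hP : IsGeodesicallyQuasiconvex L P) : IsUndistorted L P := by
  obtain ⟨R, hR⟩ := hP
  refine DominatesWordLength.of_words (S := {q : P | L q ≤ 2 * R + 1})
    ((hL.finite_ball _).preimage Subtype.val_injective.injOn) 2 fun p => ?_
  obtain ⟨f, hf0, hfp, hstep, hf⟩ := hL.exists_geodesic 1 p
  rw [ldist_one_left] at hfp hstep hf
  have hnear : ∀ i ≤ L p, ∃ q : P, ldist L (f i) q ≤ R := fun i hi =>
    let ⟨q, hq, hiq⟩ := hR p p.2 (f i) (hf i hi)
    ⟨⟨q, hq⟩, hiq⟩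
  choose! q hq using hnear
  refine ⟨q 0 :: (List.range (L p)).map (fun i => (q i)⁻¹ * q (i + 1)) ++ [(q (L p))⁻¹ * p],
    fun x hx => ?_, by simp; omega, ?_⟩
  · simp only [List.cons_append, List.mem_cons, List.mem_append, List.mem_map, List.mem_range,
      List.not_mem_nil, or_false] at hx
    rcases hx with rfl | ⟨i, hi, rfl⟩ | rfl
    · have := hq 0 (Nat.zero_le _)
      rw [hf0, ldist_one_left] at this
      exact this.trans (by omega)
    · have := hL.ldist_triangle (q i) (f i) (q (i + 1))
      have := hL.ldist_triangle (f i) (f (i + 1)) (q (i + 1))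
      have := hL.ldist_comm (q i) (f i)
      have := hq i hi.le
      have := hq (i + 1) hi
      have := hstep i hi
      exact show ldist L (q i) (q (i + 1)) ≤ 2 * R + 1 by omega
    · have := hq (L p) le_rfl
      rw [hfp, hL.ldist_comm] at this
      exact show ldist L (q (L p)) p ≤ 2 * R + 1 by omega
  · simp [list_prod_range_inv_mul]

theorem exists_near_inf (hL : IsGeodesicLength L) (P Q : Subgroup G) (R S : ℕ) :
    ∃ B, ∀ x, Near L R P x → Near L S Q x → Near L B (P ⊓ Q) x := by
  obtain ⟨B, hB⟩ := exists_bounded_witness ((hL.finite_ball R).prod (hL.finite_ball S))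
    (fun uv w => w * uv.1 ∈ P ∧ w * uv.2 ∈ Q) L
  refine ⟨B, fun x ⟨p, hp, hxp⟩ ⟨q, hq, hxq⟩ => ?_⟩
  obtain ⟨w, ⟨hwP, hwQ⟩, hwB⟩ := hB (x⁻¹ * p, x⁻¹ * q) ⟨hxp, hxq⟩ x (by simpa using ⟨hp, hq⟩)
  refine ⟨x * w⁻¹, ⟨?_, ?_⟩, by simpa [ldist, hL.inv] using hwB⟩
  · simpa [mul_assoc] using P.mul_mem hp (P.inv_mem hwP)
  · simpa [mul_assoc] using Q.mul_mem hq (Q.inv_mem hwQ)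

theorem finite_near_near (hL : IsGeodesicLength L) (hfin : ((P ⊓ Q : Subgroup G) : Set G).Finite)
    (R S : ℕ) : {x | Near L R P x ∧ Near L S Q x}.Finite := by
  obtain ⟨B, hB⟩ := hL.exists_near_inf P Q R S
  refine (hfin.biUnion fun p _ => hL.finite_ldist_le p B).subset fun x hx => ?_
  obtain ⟨p, hp, hxp⟩ := hB x hx.1 hx.2
  exact Set.mem_biUnion hp (by rwa [Set.mem_ofPred_eq, hL.ldist_comm])

end IsGeodesicLength

theorem IsGeodesicallyQuasiconvex.inf (hL : IsGeodesicLength L)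
    (hP : IsGeodesicallyQuasiconvex L P) (hQ : IsGeodesicallyQuasiconvex L Q) :
    IsGeodesicallyQuasiconvex L (P ⊓ Q) := by
  obtain ⟨R, hR⟩ := hP
  obtain ⟨S, hS⟩ := hQ
  obtain ⟨B, hB⟩ := hL.exists_near_inf P Q R S
  exact ⟨B, fun p hp x hx => hB x (hR p hp.1 x hx) (hS p hp.2 x hx)⟩

theorem IsSymmGen.sub_le_wordLength {Y : Set G} (hY : IsSymmGen Y) {l : List G}
    (hl : IsGeodesicWord Y l) {i j : ℕ} (hj : j ≤ l.length) :
    j - i ≤ wordLength Y ((l.take i).prod⁻¹ * (l.take j).prod) := by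
  have htake := wordLength_prod_le fun x hx => hl.1 x (List.mem_of_mem_take (i := i) hx)
  have hdrop := wordLength_prod_le fun x hx => hl.1 x (List.mem_of_mem_drop (i := j) hx)
  have hprod : l.prod =
      (l.take i).prod * ((l.take i).prod⁻¹ * (l.take j).prod) * (l.drop j).prod := by
    rw [mul_inv_cancel_left, List.prod_take_mul_prod_drop]
  have hlen := hl.2
  rw [hprod] at hlen
  have := hY.wordLength_mul_le ((l.take i).prod * ((l.take i).prod⁻¹ * (l.take j).prod))
    (l.drop j).prod
  have := hY.wordLength_mul_le (l.take i).prod ((l.take i).prod⁻¹ * (l.take j).prod)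
  rw [List.length_take] at htake
  rw [List.length_drop] at hdrop
  omega

theorem IsGeodesicWord.isQuasigeodesicPath {Y : Set P} (hY : IsSymmGen Y) {K M : ℕ}
    (hK : ∀ p, wordLength Y p ≤ K * L p + K) (hM : ∀ y ∈ Y, L y ≤ M) {l : List P}
    (hl : IsGeodesicWord Y l) :
    IsQuasigeodesicPath L K M (fun i => ((l.take i).prod : G)) l.length where
  ldist_succ_le i hi := by
    have hstep : (l.take i).prod⁻¹ * (l.take (i + 1)).prod = l[i] := by
      rw [List.prod_take_succ l i hi, inv_mul_cancel_left]
    have hle := hM _ (hl.1 _ (List.getElem_mem hi))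
    rwa [← hstep] at hle
  sub_le _ _ _ hj := (hY.sub_le_wordLength hl hj).trans (hK _)

theorem IsHyperbolicLength.isUndistorted_iff (hL : IsHyperbolicLength L D) :
    IsUndistorted L P ↔ IsGeodesicallyQuasiconvex L P := by
  refine ⟨?_, hL.isUndistorted_of_isGeodesicallyQuasiconvex⟩
  rintro ⟨Y, hY, K, hK⟩
  obtain ⟨M, hM⟩ := (hY.1.image fun y : P => L y).bddAbove
  obtain ⟨R, hR⟩ := hL.morse K M
  refine ⟨R, fun p hp x hx => ?_⟩
  obtain ⟨l, hl, hlp⟩ := hY.exists_isGeodesicWord (⟨p, hp⟩ : P)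
  obtain ⟨i, -, hi⟩ := hR _ _ (hl.isQuasigeodesicPath hY hK fun y hy => hM ⟨y, hy, rfl⟩) x
    (by simpa [hlp] using hx)
  exact ⟨_, SetLike.coe_mem _, hi⟩

end Quasiconvexity

/-! ### Distortion of cyclic subgroups -/

section CyclicSubgroups

variable {L : G → ℕ} {D : ℕ}

namespace IsHyperbolicLength

theorem isGeodesicallyQuasiconvex_centralizer_singleton (hL : IsHyperbolicLength L D) (s : G) :
    IsGeodesicallyQuasiconvex L (Subgroup.centralizer {s}) := by
  obtain ⟨B, hB⟩ := exists_bounded_witness (hL.finite_ball (3 * L s + D))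
    (fun u w => u * w = w * s) L
  refine ⟨B, fun p hp x hx => ?_⟩
  have hps : p * s = s * p := Subgroup.mem_centralizer_singleton_iff.1 hp
  have hclose : L (x⁻¹ * (s * x)) ≤ 3 * L s + D := by
    refine hL.ldist_le_of_isBetween_of_isBetween (a' := s * 1) (b' := s * p) hx
      (isBetween_mul_left.2 hx) (ldist_mul_left _ _ _ _).symm ?_ ?_
    · simp [ldist]
    · rw [← hps]; simp [ldist]
  obtain ⟨w, hw, hwB⟩ := hB _ hclose (x⁻¹ * p) (by rw [mul_assoc _ p, hps]; group)
  refine ⟨x * w, Subgroup.mem_centralizer_singleton_iff.2 ?_, by simpa [ldist] using hwB⟩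
  rw [mul_assoc, ← hw]
  group

theorem isGeodesicallyQuasiconvex_centralizer (hL : IsHyperbolicLength L D) {S : Set G}
    (hS : S.Finite) : IsGeodesicallyQuasiconvex L (Subgroup.centralizer S) := by
  induction S, hS using Set.Finite.induction_on with
  | empty =>
    exact ⟨0, fun p _ x _ => ⟨x, by simp [Subgroup.mem_centralizer_iff], (hL.ldist_self x).le⟩⟩
  | @insert a S _ _ ih =>
    have hinsert : Subgroup.centralizer (insert a S) =
        Subgroup.centralizer {a} ⊓ Subgroup.centralizer S := by
      ext x; simp [Subgroup.mem_centralizer_iff]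
    rw [hinsert]
    exact (hL.isGeodesicallyQuasiconvex_centralizer_singleton a).inf hL.toIsGeodesicLength ih

-- The centre of the centralizer of `g` works: it is an intersection of finitely many centralizers,
-- because the centralizer is finitely generated.
theorem exists_isUndistorted_isMulCommutative (hL : IsHyperbolicLength L D) (g : G) :
    ∃ Z : Subgroup G, IsMulCommutative Z ∧ IsUndistorted L Z ∧ g ∈ Z := by
  set C := Subgroup.centralizer {g}
  have hC : IsGeodesicallyQuasiconvex L C := hL.isGeodesicallyQuasiconvex_centralizer_singleton g
  obtain ⟨S, hSC, hS⟩ := (Subgroup.fg_iff C).1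
    ((Group.fg_iff_subgroup_fg C).1 (hL.isUndistorted_iff.2 hC).group_fg)
  have hCC : IsGeodesicallyQuasiconvex L (Subgroup.centralizer (C : Set G)) := by
    rw [← hSC, Subgroup.centralizer_closure]
    exact hL.isGeodesicallyQuasiconvex_centralizer hS
  refine ⟨C ⊓ Subgroup.centralizer C, Subgroup.le_centralizer_iff_isMulCommutative.1 ?_,
    hL.isUndistorted_iff.2 (hC.inf hL.toIsGeodesicLength hCC), ?_, ?_⟩
  · exact inf_le_right.trans (Subgroup.centralizer_le inf_le_left)
  · exact Subgroup.mem_centralizer_singleton_iff.2 rfl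
  · exact Subgroup.mem_centralizer_iff.2 fun x hx => (Subgroup.mem_centralizer_singleton_iff.1 hx)

end IsHyperbolicLength

theorem exists_hom_int_ne_one {M : Type*} [CommGroup M] [Group.FG M] {g : M}
    (hg : ¬ IsOfFinOrder g) : ∃ φ : M →* Multiplicative ℤ, φ g ≠ 1 := by
  have : Module.Finite ℤ (Additive M) := by
    rw [Module.Finite.iff_addGroup_fg]
    infer_instance
  let T := Submodule.torsion ℤ (Additive M)
  let b := Module.Free.chooseBasis ℤ (Additive M ⧸ T)
  have hne : T.mkQ (Additive.ofMul g) ≠ 0 := by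
    rw [Submodule.mkQ_apply, Ne, Submodule.Quotient.mk_eq_zero, Submodule.mem_torsion_iff]
    rintro ⟨a, ha⟩
    exact hg (isOfFinOrder_iff_zpow_eq_one.2 ⟨a, nonZeroDivisors.coe_ne_zero a, ha⟩)
  obtain ⟨i, hi⟩ : ∃ i, b.coord i (T.mkQ (Additive.ofMul g)) ≠ 0 := by
    by_contra! hzero
    exact hne (b.forall_coord_eq_zero_iff.1 hzero)
  exact ⟨AddMonoidHom.toMultiplicativeRight ((b.coord i).comp T.mkQ).toAddMonoidHom, hi⟩

namespace IsHyperbolicLength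

open scoped IsMulCommutative in
theorem exists_natAbs_le_of_not_isOfFinOrder (hL : IsHyperbolicLength L D) {g : G}
    (hg : ¬ IsOfFinOrder g) : ∃ K, ∀ n : ℤ, n.natAbs ≤ K * L (g ^ n) + K := by
  obtain ⟨Z, hZ, hund, hgZ⟩ := hL.exists_isUndistorted_isMulCommutative g
  have := hund.group_fg
  obtain ⟨φ, hφ⟩ := exists_hom_int_ne_one (g := (⟨g, hgZ⟩ : Z))
    (fun h => hg (Z.subtype.isOfFinOrder h))
  obtain ⟨Y, hY, K, hK⟩ := hund
  obtain ⟨B, hB⟩ := hY.exists_le_mul_wordLength (ℓ := fun z => (φ z).toAdd.natAbs) (by simp)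
    fun y z => by simpa using Int.natAbs_add_le (φ y).toAdd (φ z).toAdd
  refine ⟨B * K, fun n => ?_⟩
  calc n.natAbs ≤ (φ (⟨g, hgZ⟩ ^ n)).toAdd.natAbs := by
        rw [map_zpow, toAdd_zpow, smul_eq_mul, Int.natAbs_mul]
        exact Nat.le_mul_of_pos_right _ (Int.natAbs_pos.2 hφ)
    _ ≤ B * wordLength Y (⟨g, hgZ⟩ ^ n) := hB _
    _ ≤ B * (K * L (g ^ n) + K) := Nat.mul_le_mul_left B (hK _)
    _ = B * K * L (g ^ n) + B * K := by ring

theorem isUndistorted_zpowers (hL : IsHyperbolicLength L D) (g : G) :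
    IsUndistorted L (Subgroup.zpowers g) := by
  by_cases hg : IsOfFinOrder g
  · have : Finite (Subgroup.zpowers g) := finite_zpowers.2 hg
    exact .of_finite _
  · obtain ⟨K, hK⟩ := hL.exists_natAbs_le_of_not_isOfFinOrder hg
    let γ : Subgroup.zpowers g := ⟨g, Subgroup.mem_zpowers g⟩
    refine .of_words (S := {γ, γ⁻¹}) (Set.toFinite _) K ?_
    rintro ⟨_, n, rfl⟩
    have hword : ∀ δ : Subgroup.zpowers g, δ ∈ ({γ, γ⁻¹} : Set _) →
        IsWordOver {γ, γ⁻¹} (List.replicate n.natAbs δ) :=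
      fun δ hδ x hx => List.eq_of_mem_replicate hx ▸ hδ
    rcases n.natAbs_eq with hn | hn
    · refine ⟨_, hword γ (by simp), by simpa using hK n, Subtype.ext ?_⟩
      simp [γ, ← zpow_natCast, ← hn]
    · refine ⟨_, hword γ⁻¹ (by simp), by simpa using hK n, Subtype.ext ?_⟩
      rw [List.prod_replicate, Subgroup.coe_pow, Subgroup.coe_inv, inv_pow, ← zpow_natCast,
        ← zpow_neg, ← hn]

end IsHyperbolicLength

end CyclicSubgroups

/-! ### Commensurable subgroups -/

section RelIndex

variable {P Q C : Subgroup G}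

theorem relIndex_ne_zero_iff :
    P.relIndex Q ≠ 0 ↔ ∃ F : Set G, F.Finite ∧ (Q : Set G) ⊆ F * P := by
  constructor
  · intro h
    have : (P.subgroupOf Q).FiniteIndex := ⟨h⟩
    refine ⟨Set.range fun c : Q ⧸ P.subgroupOf Q => ((c.out : Q) : G), Set.finite_range _,
      fun q hq => ?_⟩
    let c : Q ⧸ P.subgroupOf Q := QuotientGroup.mk ⟨q, hq⟩
    have hc : (c.out)⁻¹ * ⟨q, hq⟩ ∈ P.subgroupOf Q := QuotientGroup.eq.1 (Quotient.out_eq' c)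
    exact ⟨c.out, ⟨c, rfl⟩, _, Subgroup.mem_subgroupOf.1 hc, by simp⟩
  · rintro ⟨F, hF, hQ⟩
    have : Finite (QuotientGroup.mk '' F : Set (G ⧸ P)) := hF.image _
    have hmem : ∀ q : Q, (QuotientGroup.mk (q : G) : G ⧸ P) ∈ QuotientGroup.mk '' F := fun q => by
      obtain ⟨f, hf, p, hp, hfp⟩ := hQ q.2
      exact ⟨f, hf, QuotientGroup.eq.2 (by rwa [← hfp, inv_mul_cancel_left])⟩
    have : Finite (Q ⧸ P.subgroupOf Q) :=
      .of_injective (fun c => (⟨_, hmem c.out⟩ : QuotientGroup.mk '' F)) fun c d h => by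
        have hcd : (c.out : G)⁻¹ * d.out ∈ P := QuotientGroup.eq.1 (congrArg Subtype.val h)
        rw [← Quotient.out_eq' c, ← Quotient.out_eq' d]
        exact QuotientGroup.eq.2 hcd
    exact Subgroup.index_ne_zero_of_finite

theorem finite_of_relIndex_ne_zero (hP : (P : Set G).Finite) (h : P.relIndex Q ≠ 0) :
    (Q : Set G).Finite := by
  have : Finite P := hP
  have hcard : Nat.card Q ≠ 0 := by
    rw [← Subgroup.relIndex_bot_left] at *
    exact Subgroup.relIndex_ne_zero_trans (by simpa using Nat.card_pos.ne') h
  exact Nat.finite_of_card_ne_zero hcard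

theorem relIndex_zpowers_zpow_ne_zero (z : G) {n : ℤ} (hn : n ≠ 0) :
    (Subgroup.zpowers (z ^ n)).relIndex (Subgroup.zpowers z) ≠ 0 := by
  refine relIndex_ne_zero_iff.2 ⟨(fun k : ℤ => z ^ k) '' Set.Ico 0 |n|,
    (Set.finite_Ico _ _).image _, ?_⟩
  rintro _ ⟨k, rfl⟩
  refine ⟨_, ⟨k % n, ⟨Int.emod_nonneg _ hn, Int.emod_lt_abs _ hn⟩, rfl⟩, _, ⟨k / n, rfl⟩, ?_⟩
  simp only [← zpow_mul, ← zpow_add, Int.emod_add_mul_ediv]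

theorem relIndex_ne_zero_of_infinite {z : G} (hz : (Subgroup.zpowers z).relIndex C ≠ 0)
    (hQC : Q ≤ C) (hQ : (Q : Set G).Infinite) : Q.relIndex C ≠ 0 := by
  have hzQ : (Subgroup.zpowers z ⊓ Q).relIndex Q ≠ 0 := by
    rw [Subgroup.inf_relIndex_right]
    exact mt (Subgroup.relIndex_eq_zero_of_le_right hQC) hz
  obtain ⟨n, hn, hnQ⟩ : ∃ n : ℤ, n ≠ 0 ∧ z ^ n ∈ Q := by
    by_contra! hnone
    refine hQ (finite_of_relIndex_ne_zero ((Set.finite_singleton 1).subset ?_) hzQ)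
    rintro _ ⟨⟨n, rfl⟩, hn⟩
    have : n = 0 := by_contra fun hne => hnone n hne hn
    simp [this]
  exact mt (Subgroup.relIndex_eq_zero_of_le_left (Subgroup.zpowers_le.2 hnQ))
    (Subgroup.relIndex_ne_zero_trans (relIndex_zpowers_zpow_ne_zero z hn) hz)

theorem IsVirtuallyCyclic.exists_zpowers (hC : IsVirtuallyCyclic C) :
    ∃ z ∈ C, (Subgroup.zpowers z).relIndex C ≠ 0 := by
  obtain ⟨Z, hZ, hindex⟩ := hC
  obtain ⟨z, rfl⟩ := (Subgroup.isCyclic_iff_exists_zpowers_eq_top Z).1 hZ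
  refine ⟨z, z.2, ?_⟩
  have hmap : Subgroup.zpowers (z : G) = (Subgroup.zpowers z).map C.subtype :=
    (MonoidHom.map_zpowers C.subtype z).symm
  rw [hmap, Subgroup.relIndex, Subgroup.subgroupOf,
    Subgroup.comap_map_eq_self_of_injective Subtype.val_injective]
  exact hindex.index_ne_zero

theorem mem_conj_smul {g x : G} : x ∈ MulAut.conj g • P ↔ g⁻¹ * x * g ∈ P := by
  rw [Subgroup.mem_pointwise_smul_iff_inv_smul_mem, MulAut.smul_def, ← map_inv, MulAut.conj_apply,
    inv_inv]

theorem mem_commensurator_iff {g : G} : g ∈ Subgroup.Commensurable.commensurator C ↔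
    Subgroup.Commensurable (MulAut.conj g • C) C :=
  Subgroup.Commensurable.commensurator_mem_iff C g

theorem relIndex_conj_smul (g : G) :
    (MulAut.conj g • P).relIndex (MulAut.conj g • Q) = P.relIndex Q :=
  Subgroup.relIndex_map_map_of_injective P Q (MulAut.conj g).injective

end RelIndex

section Undistorted

variable {L : G → ℕ} {P Q : Subgroup G}

theorem IsUndistorted.of_relIndex_ne_zero (hL : IsGeodesicLength L) (hP : IsUndistorted L P)
    (hPQ : P ≤ Q) (h : P.relIndex Q ≠ 0) : IsUndistorted L Q := by
  obtain ⟨F, hF, hQF⟩ := relIndex_ne_zero_iff.1 h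
  obtain ⟨Y, hY, c, hc⟩ := hP
  obtain ⟨M, hM⟩ := (hF.image L).bddAbove
  refine .of_words (S := (↑) ⁻¹' F ∪ Subgroup.inclusion hPQ '' Y)
    ((hF.preimage Subtype.val_injective.injOn).union (hY.1.image _)) (c * M + c + 1) ?_
  rintro ⟨q, hq⟩
  obtain ⟨f, hf, p, hp, rfl⟩ := hQF hq
  obtain ⟨l, hl, hlp⟩ := hY.exists_isGeodesicWord (⟨p, hp⟩ : P)
  have hfQ : f ∈ Q := (Q.mul_mem_cancel_right (hPQ hp)).1 hq
  refine ⟨⟨f, hfQ⟩ :: l.map (Subgroup.inclusion hPQ), ?_, ?_, ?_⟩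
  · rintro x (_ | ⟨_, hx⟩)
    · exact Or.inl hf
    · obtain ⟨y, hy, rfl⟩ := List.mem_map.1 hx
      exact Or.inr ⟨y, hl.1 y hy, rfl⟩
  · have hLp : L p ≤ M + L (f * p) := by
      have hmul := hL.mul_le f⁻¹ (f * p)
      rw [inv_mul_cancel_left, hL.inv] at hmul
      exact hmul.trans (Nat.add_le_add_right (hM ⟨f, hf, rfl⟩) _)
    calc (⟨f, hfQ⟩ :: l.map (Subgroup.inclusion hPQ)).length = wordLength Y ⟨p, hp⟩ + 1 := by
          rw [List.length_cons, List.length_map, hl.2, hlp]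
      _ ≤ c * (M + L (f * p)) + c + 1 := by gcongr; exact (hc _).trans (by gcongr)
      _ ≤ (c * M + c + 1) * L (f * p) + (c * M + c + 1) := by nlinarith [Nat.zero_le (c * M)]
  · rw [List.prod_cons, ← map_list_prod, hlp]
    rfl

theorem IsUndistorted.conj_smul (hL : IsGeodesicLength L) (hP : IsUndistorted L P) (g : G) :
    IsUndistorted L (MulAut.conj g • P) := by
  refine hP.of_surjective (f := (P.equivSMul (MulAut.conj g)).toMonoidHom)
    (P.equivSMul (MulAut.conj g)).surjective (c := 2 * L g + 1) fun p => ?_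
  change L p ≤ (2 * L g + 1) * L (g * p * g⁻¹) + (2 * L g + 1)
  have hmul := hL.mul_le (g⁻¹ * (g * p * g⁻¹)) g
  have hmul' := hL.mul_le g⁻¹ (g * p * g⁻¹)
  rw [hL.inv] at hmul'
  rw [show g⁻¹ * (g * p * g⁻¹) * g = p by group] at hmul
  nlinarith [Nat.zero_le (L g * L (g * p * g⁻¹))]

end Undistorted

/-! ### Elementary hulls -/

/-- `E` contains `C` as a subgroup of finite index, and `C` meets its conjugates by elements
outside `E` in finite subgroups. For an infinite quasiconvex subgroup `C` which is virtually cyclic,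
`E` is the commensurator of `C`. -/
structure IsElementaryHull (C E : Subgroup G) : Prop where
  le : C ≤ E
  relIndex_ne_zero : C.relIndex E ≠ 0
  finite_inf : ∀ g ∉ E, ((C ⊓ MulAut.conj g • C : Subgroup G) : Set G).Finite

section ElementaryHull

variable {L : G → ℕ} {D : ℕ} {C E P : Subgroup G}

theorem IsHyperbolicLength.exists_isBetween_near_translate (hL : IsHyperbolicLength L D) {g q : G}
    (hq : 2 * (L g + 4 * D) + 2 ≤ L q) :
    ∃ x y, IsBetween L 1 x q ∧ IsBetween L g y (q * g) ∧ ldist L x y ≤ 4 * D := by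
  obtain ⟨x, hx, hxt⟩ := hL.exists_isBetween 1 q (t := L g + 4 * D + 1)
    (by rw [ldist_one_left]; omega)
  have hxq : ldist L 1 x + ldist L x q = L q := by rw [← ldist_one_left L q]; exact hx
  obtain ⟨y, hy | hy | hy, hxy⟩ := hL.slim_quadrilateral hx g (q * g)
  · have := hy.ldist_le
    have := hL.ldist_triangle 1 y x
    have := hL.ldist_comm x y
    have := ldist_one_left L g
    omega
  · exact ⟨x, y, hx, hy, hxy⟩
  · have := (hL.isBetween_symm hy).ldist_le
    have := hL.ldist_triangle x y q
    have := hL.ldist_comm q y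
    have : ldist L q (q * g) = L g := by simp [ldist]
    omega

-- A long element `q` of `C ∩ gCg⁻¹` gives geodesics from `1` to `q` and from `g` to `qg` which run
-- near `C` and near `gC`, and near each other in the middle.
theorem IsHyperbolicLength.exists_eq_mul_mul_of_infinite (hL : IsHyperbolicLength L D) {R : ℕ}
    (hC : ∀ c ∈ C, ∀ x, IsBetween L 1 x c → Near L R C x) {g : G}
    (hinf : ((C ⊓ MulAut.conj g • C : Subgroup G) : Set G).Infinite) :
    ∃ c ∈ C, ∃ f, L f ≤ 2 * R + 4 * D ∧ ∃ c' ∈ C, g = c * f * c' := by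
  obtain ⟨q, ⟨hqC, hqg⟩, hqL⟩ : ∃ q ∈ C ⊓ MulAut.conj g • C, 2 * (L g + 4 * D) + 2 ≤ L q := by
    by_contra! hshort
    exact hinf ((hL.finite_ball _).subset fun q hq => (hshort q hq).le)
  obtain ⟨x, y, hx, hy, hxy⟩ := hL.exists_isBetween_near_translate hqL
  obtain ⟨c, hc, hxc⟩ := hC q hqC x hx
  obtain ⟨c', hc', hyc'⟩ := hC _ (mem_conj_smul.1 hqg) (g⁻¹ * y)
    ((isBetween_mul_left (g := g)).1 (by simpa [mul_assoc] using hy))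
  rw [← ldist_mul_left L g, mul_inv_cancel_left] at hyc'
  refine ⟨c, hc, c⁻¹ * (g * c'), ?_, c'⁻¹, C.inv_mem hc', by group⟩
  have := hL.ldist_triangle c x (g * c')
  have := hL.ldist_triangle x y (g * c')
  have := hL.ldist_comm c x
  change ldist L c (g * c') ≤ _
  omega

theorem IsHyperbolicLength.relIndex_commensurator_ne_zero (hL : IsHyperbolicLength L D)
    (hC : IsGeodesicallyQuasiconvex L C) (hinf : (C : Set G).Infinite) :
    C.relIndex (Subgroup.Commensurable.commensurator C) ≠ 0 := by
  obtain ⟨R, hR⟩ := hC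
  set E := Subgroup.Commensurable.commensurator C
  have hCE : C ≤ E := fun c hc => mem_commensurator_iff.2 (by
    rw [Subgroup.conj_smul_eq_self_of_mem hc])
  have hcover : ∀ f ∈ E, ∃ F : Set G, F.Finite ∧
      (C : Set G) ⊆ F * (MulAut.conj f • C : Subgroup G) :=
    fun f hf => relIndex_ne_zero_iff.1 (mem_commensurator_iff.1 hf).1
  choose! F hF hCF using hcover
  have hfin : (⋃ f ∈ {f | L f ≤ 2 * R + 4 * D} ∩ E, F f * {f}).Finite :=
    ((hL.finite_ball _).inter_of_left _).biUnion fun f hf =>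
      (hF f hf.2).mul (Set.finite_singleton f)
  refine relIndex_ne_zero_iff.2 ⟨_, hfin, fun g hg => ?_⟩
  obtain ⟨c, hc, f, hf, c', hc', rfl⟩ := hL.exists_eq_mul_mul_of_infinite hR
    fun hfin => hinf (finite_of_relIndex_ne_zero hfin
      (by rw [Subgroup.inf_relIndex_left]; exact (mem_commensurator_iff.1 hg).1))
  have hfE : f ∈ E := (E.mul_mem_cancel_left (hCE hc)).1 ((E.mul_mem_cancel_right (hCE hc')).1 hg)
  obtain ⟨k, hk, p, hp, rfl⟩ := hCF f hfE hc
  refine ⟨k * f, Set.mem_biUnion ⟨hf, hfE⟩ ⟨k, hk, f, rfl, rfl⟩, f⁻¹ * p * f * c',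
    C.mul_mem (mem_conj_smul.1 hp) hc', ?_⟩
  simp only
  group

theorem IsHyperbolicLength.exists_isElementaryHull (hL : IsHyperbolicLength L D) {z : G}
    (hz : (Subgroup.zpowers z).relIndex C ≠ 0) (hC : IsGeodesicallyQuasiconvex L C) :
    ∃ E, IsElementaryHull C E := by
  by_cases hfin : (C : Set G).Finite
  · exact ⟨C, le_rfl, by simp, fun g _ => hfin.subset inf_le_left⟩
  refine ⟨_, fun c hc => mem_commensurator_iff.2 ?_, hL.relIndex_commensurator_ne_zero hC hfin,
    fun g hg => by_contra fun hinf => hg (mem_commensurator_iff.2 ⟨?_, ?_⟩)⟩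
  · rw [Subgroup.conj_smul_eq_self_of_mem hc]
  · rw [← Subgroup.inf_relIndex_left]
    exact relIndex_ne_zero_of_infinite hz inf_le_left hinf
  · have hz' : (Subgroup.zpowers (MulAut.conj g z)).relIndex (MulAut.conj g • C) ≠ 0 := by
      have hmap := (MulAut.conj g).toMonoidHom.map_zpowers z
      rw [← relIndex_conj_smul g] at hz
      exact hmap ▸ hz
    rw [← Subgroup.inf_relIndex_right]
    exact relIndex_ne_zero_of_infinite hz' inf_le_right hinf

theorem Near.conj_smul (hL : IsGeodesicLength L) {S : ℕ} {w x : G} (h : Near L S P (w⁻¹ * x)) :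
    Near L (S + L w) (MulAut.conj w • P) x := by
  obtain ⟨p, hp, hxp⟩ := h
  rw [← ldist_mul_left L w, mul_inv_cancel_left] at hxp
  refine ⟨w * p * w⁻¹, mem_conj_smul.2 (by simpa [mul_assoc] using hp), ?_⟩
  have := hL.ldist_triangle x (w * p) (w * p * w⁻¹)
  have : ldist L (w * p) (w * p * w⁻¹) = L w := by rw [ldist, inv_mul_cancel_left, hL.inv]
  omega

theorem Near.mul_left {R : ℕ} {p x : G} (hp : p ∈ P) (h : Near L R P x) : Near L R P (p * x) := by
  obtain ⟨q, hq, hxq⟩ := h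
  exact ⟨p * q, P.mul_mem hp hq, by rwa [ldist_mul_left]⟩

theorem IsElementaryHull.exists_ldist_le (hE : IsElementaryHull C E) (hL : IsGeodesicLength L)
    (R S : ℕ) : ∃ K, ∀ r ∉ E, ∀ x x', Near L R C x → Near L R C x' →
      Near L S C (r⁻¹ * x) → Near L S C (r⁻¹ * x') → ldist L x x' ≤ K := by
  have hfin : (⋃ w ∈ {w | L w ≤ R + S} \ E,
      {x | Near L R C x ∧ Near L (S + L w) (MulAut.conj w • C) x}).Finite :=
    ((hL.finite_ball _).sdiff).biUnion fun w hw => hL.finite_near_near (hE.finite_inf w hw.2) _ _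
  obtain ⟨K, hK⟩ := (hfin.image L).bddAbove
  refine ⟨K + K, fun r hr x x' hx hx' hrx hrx' => ?_⟩
  obtain ⟨c, hc, hxc⟩ := id hx
  obtain ⟨d, hd, hxd⟩ := id hrx
  rw [← ldist_mul_left L r, mul_inv_cancel_left] at hxd
  have hwL : L (c⁻¹ * r * d) ≤ R + S := by
    have := hL.ldist_triangle c x (r * d)
    have := hL.ldist_comm c x
    rw [mul_assoc]
    change ldist L c (r * d) ≤ _
    omega
  have hwE : c⁻¹ * r * d ∉ E := by
    rwa [E.mul_mem_cancel_right (hE.le hd), E.mul_mem_cancel_left (E.inv_mem (hE.le hc))]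
  have hnear : ∀ y, Near L R C y → Near L S C (r⁻¹ * y) → ldist L c y ≤ K := fun y hy hry => by
    refine hK ⟨c⁻¹ * y, Set.mem_biUnion ⟨hwL, hwE⟩ ⟨hy.mul_left (C.inv_mem hc), ?_⟩, rfl⟩
    have := hry.mul_left (C.inv_mem hd)
    exact Near.conj_smul hL (by simpa [mul_assoc] using this)
  calc ldist L x x' ≤ ldist L x c + ldist L c x' := hL.ldist_triangle _ _ _
    _ ≤ K + K := by
      rw [hL.ldist_comm x c]
      exact Nat.add_le_add (hnear x hx hrx) (hnear x' hx' hrx')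

theorem IsElementaryHull.exists_le_of_mem (hE : IsElementaryHull C E)
    (hCP : ((C ⊓ P : Subgroup G) : Set G).Finite) (L : G → ℕ) (r₀ : G) :
    ∃ K, ∀ p ∈ P, p * r₀ ∈ E → L (p * r₀) ≤ K := by
  have hEP : ((E ⊓ P : Subgroup G) : Set G).Finite := by
    refine finite_of_relIndex_ne_zero hCP ?_
    have hC : C.relIndex (E ⊓ P) ≠ 0 :=
      mt (Subgroup.relIndex_eq_zero_of_le_right inf_le_left) hE.relIndex_ne_zero
    rwa [← Subgroup.inf_relIndex_right, ← inf_assoc, inf_eq_left.2 hE.le] at hC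
  by_cases hex : ∃ p ∈ P, p * r₀ ∈ E
  · obtain ⟨p₁, hp₁, hp₁E⟩ := hex
    obtain ⟨K, hK⟩ := (hEP.image fun q => L (q * (p₁ * r₀))).bddAbove
    refine ⟨K, fun p hp hpE => hK ⟨p * p₁⁻¹, ⟨?_, P.mul_mem hp (P.inv_mem hp₁)⟩, ?_⟩⟩
    · simpa [mul_assoc] using E.mul_mem hpE (E.inv_mem hp₁E)
    · simp [mul_assoc]
  · exact ⟨0, fun p hp hpE => (hex ⟨p, hp, hpE⟩).elim⟩

namespace IsHyperbolicLength

theorem exists_near_of_isBetween_mul (hL : IsHyperbolicLength L D)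
    (hP : IsGeodesicallyQuasiconvex L P) (r₀ : G) :
    ∃ R, ∀ p ∈ P, ∀ x, IsBetween L 1 x (p * r₀) → Near L R P x := by
  obtain ⟨R, hR⟩ := hP
  refine ⟨2 * D + (R + L r₀), fun p hp x hx => ?_⟩
  obtain ⟨y, hy | hy, hxy⟩ := hL.slim_triangle hx p
  · obtain ⟨q, hq, hyq⟩ := hR p hp y hy
    exact .of_ldist_le hL.toIsGeodesicLength ⟨q, hq, Nat.le_add_right_of_le hyq⟩ hxy
  · refine .of_ldist_le hL.toIsGeodesicLength ⟨p, hp, ?_⟩ hxy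
    have := hy.ldist_le
    have : ldist L p (p * r₀) = L r₀ := by simp [ldist]
    rw [hL.ldist_comm]
    omega

theorem near_or_near_or_le (hL : IsHyperbolicLength L D) {R R' : ℕ}
    (hC : ∀ c ∈ C, ∀ x, IsBetween L 1 x c → Near L R C x) {r c c' x : G}
    (hr : ∀ y, IsBetween L 1 y r → Near L R' P y) (hc' : c' ∈ C) (hx : IsBetween L 1 x c) :
    Near L (4 * D + R') P x ∨ Near L (4 * D + R) C (r⁻¹ * x) ∨
      L c ≤ L (c⁻¹ * r * c') + L x + 4 * D := by
  obtain ⟨y, hy | hy | hy, hxy⟩ := hL.slim_quadrilateral hx r (r * c')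
  · exact Or.inl (.of_ldist_le hL.toIsGeodesicLength (hr y hy) hxy)
  · refine Or.inr (Or.inl (.of_ldist_le (y := r⁻¹ * y) hL.toIsGeodesicLength (hC c' hc' _ ?_) ?_))
    · exact (isBetween_mul_left (g := r)).1 (by simpa using hy)
    · rwa [ldist_mul_left]
  · refine Or.inr (Or.inr ?_)
    have := (hL.isBetween_symm hy).ldist_le
    have := hL.ldist_triangle x y c
    have := hL.ldist_comm c y
    have : ldist L c (r * c') = L (c⁻¹ * r * c') := by rw [ldist, mul_assoc c⁻¹]
    rw [IsBetween, ldist_one_left, ldist_one_left] at hx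
    omega

theorem exists_le_of_notMem_elementaryHull (hL : IsHyperbolicLength L D)
    (hC : IsGeodesicallyQuasiconvex L C) (hE : IsElementaryHull C E)
    (hP : IsGeodesicallyQuasiconvex L P) (hCP : ((C ⊓ P : Subgroup G) : Set G).Finite) (r₀ : G) :
    ∃ K, ∀ p ∈ P, p * r₀ ∉ E → ∀ c ∈ C, ∀ c' ∈ C, L c ≤ L (c⁻¹ * (p * r₀) * c') + K := by
  obtain ⟨R', hR'⟩ := hL.exists_near_of_isBetween_mul hP r₀
  obtain ⟨R, hR⟩ := hC
  obtain ⟨K₁, hK₁⟩ := ((hL.finite_near_near hCP R (4 * D + R')).image L).bddAbove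
  obtain ⟨K₂, hK₂⟩ := hE.exists_ldist_le hL.toIsGeodesicLength R (4 * D + R)
  refine ⟨K₁ + K₂ + 2 + 4 * D, fun p hp hr c hc c' hc' => ?_⟩
  by_contra! hfar
  have hnear : ∀ x, IsBetween L 1 x c → K₁ < L x → L x ≤ K₁ + K₂ + 2 →
      Near L (4 * D + R) C ((p * r₀)⁻¹ * x) := fun x hx hlow hup => by
    rcases hL.near_or_near_or_le hR (hR' p hp) hc' hx with h | h | h
    · exact absurd (hK₁ ⟨x, ⟨hR c hc x hx, h⟩, rfl⟩) (by omega)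
    · exact h
    · omega
  obtain ⟨x₂, hx₂, hx₂t⟩ := hL.exists_isBetween 1 c (t := K₁ + K₂ + 2)
    (by rw [ldist_one_left]; omega)
  obtain ⟨x₁, hx₁, hx₁t⟩ := hL.exists_isBetween 1 x₂ (t := K₁ + 1) (by omega)
  have hx₁c := (hL.isBetween_trans_left hx₂ hx₁).1
  rw [IsBetween] at hx₁
  have hle := hK₂ _ hr x₁ x₂ (hR c hc _ hx₁c) (hR c hc _ hx₂)
    (hnear x₁ hx₁c (by rw [ldist_one_left] at hx₁t; omega) (by rw [ldist_one_left] at hx₁t; omega))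
    (hnear x₂ hx₂ (by rw [ldist_one_left] at hx₂t; omega) (by rw [ldist_one_left] at hx₂t; omega))
  omega

end IsHyperbolicLength

end ElementaryHull

/-! ### Normal forms in amalgams -/

section NormalForm

/-- A list of elements alternately in `A i \ C` and `A (!i) \ C`, starting in `A i`. -/
def IsReducedList (A : Bool → Subgroup G) (C : Subgroup G) : Bool → List G → Prop
  | _, [] => True
  | i, a :: l => a ∈ A i ∧ a ∉ C ∧ IsReducedList A C (!i) l

/-- The elementary consequences of an amalgam decomposition: generation by the factors and the
normal form theorem. -/
structure HasNormalForm (A : Bool → Subgroup G) (C : Subgroup G) : Prop where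
  le : ∀ i, C ≤ A i
  exists_list : ∀ g : G, ∃ l : List G, (∀ x ∈ l, ∃ i, x ∈ A i) ∧ l.prod = g
  eq_nil : ∀ i l, IsReducedList A C i l → l.prod ∈ C → l = []

variable {A : Bool → Subgroup G} {C : Subgroup G}

theorem IsReducedList.exists_word {φ : ∀ i, C →* A i} (hφ : ∀ i c, (φ i c : G) = c)
    {f : G →* Monoid.PushoutI φ} (hf : ∀ i (a : A i), f a = Monoid.PushoutI.of i a) :
    ∀ {l : List G} {i : Bool}, IsReducedList A C i l →
      ∃ w : Monoid.CoprodI.Word fun i => A i, Monoid.PushoutI.Reduced φ w ∧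
        w.fstIdx ≠ some (!i) ∧ w.toList.length = l.length ∧
        Monoid.PushoutI.ofCoprodI w.prod = f l.prod
  | [], _, _ => ⟨.empty, fun _ hg => (List.not_mem_nil hg).elim, nofun, rfl, by simp⟩
  | a :: l, i, ⟨ha, haC, hl⟩ => by
    obtain ⟨w, hw, hfst, hlen, hprod⟩ := IsReducedList.exists_word hφ hf hl
    rw [Bool.not_not] at hfst
    have hne : (⟨a, ha⟩ : A i) ≠ 1 := fun h => haC <| by
      rw [show a = 1 from congrArg Subtype.val h]; exact one_mem C
    refine ⟨.cons ⟨a, ha⟩ w hfst hne, List.forall_mem_cons.2 ⟨?_, hw⟩, by simp, ?_, ?_⟩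
    · rintro ⟨c, hc⟩
      have hca : (c : G) = a := (hφ i c).symm.trans (congrArg Subtype.val hc)
      exact haC (hca ▸ c.2)
    · simp only [Monoid.CoprodI.Word.cons, List.length_cons, hlen]
    · rw [Monoid.CoprodI.Word.prod_cons, map_mul, hprod, List.prod_cons, map_mul,
        Monoid.PushoutI.ofCoprodI_of, ← hf i ⟨a, ha⟩]

namespace IsAmalgamatedFreeProduct

variable (amal : IsAmalgamatedFreeProduct (A true) (A false) C)
include amal

theorem le_factor : ∀ i, C ≤ A i
  | true => amal.le_left
  | false => amal.le_right

theorem exists_list_factors (g : G) :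
    ∃ l : List G, (∀ x ∈ l, ∃ i, x ∈ A i) ∧ l.prod = g := by
  have hg : g ∈ Subgroup.closure ((A true : Set G) ∪ A false) := by
    rw [Subgroup.closure_union, Subgroup.closure_eq, Subgroup.closure_eq, amal.sup_eq_top]
    exact Subgroup.mem_top g
  rw [← Subgroup.mem_toSubmonoid, Subgroup.closure_toSubmonoid] at hg
  obtain ⟨l, hl, hlg⟩ := Submonoid.exists_list_of_mem_closure hg
  refine ⟨l, fun x hx => ?_, hlg⟩
  rcases hl x hx with (h | h) | (h | h)
  exacts [⟨true, h⟩, ⟨false, h⟩, ⟨true, inv_mem_iff.1 h⟩, ⟨false, inv_mem_iff.1 h⟩]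

theorem hasNormalForm : HasNormalForm A C := by
  refine ⟨amal.le_factor, amal.exists_list_factors, fun i l hl hlC => ?_⟩
  let φ : ∀ i, C →* A i := fun i => Subgroup.inclusion (amal.le_factor i)
  have hφ : ∀ i, Function.Injective (φ i) := fun i =>
    Subgroup.inclusion_injective (amal.le_factor i)
  obtain ⟨f, htrue, hfalse⟩ := amal.univ (Monoid.PushoutI φ)
    (Monoid.PushoutI.of (φ := φ) true) (Monoid.PushoutI.of (φ := φ) false) fun c hA hB => by
      have hc : c ∈ C := amal.inf_eq ▸ ⟨hA, hB⟩
      exact (Monoid.PushoutI.of_apply_eq_base φ true ⟨c, hc⟩).trans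
        (Monoid.PushoutI.of_apply_eq_base φ false ⟨c, hc⟩).symm
  have hf : ∀ i (a : A i), f a = Monoid.PushoutI.of i a := Bool.rec hfalse htrue
  obtain ⟨w, hw, -, hlen, hprod⟩ := hl.exists_word (φ := φ) (fun _ _ => rfl) hf
  have hbase : Monoid.PushoutI.ofCoprodI w.prod ∈ (Monoid.PushoutI.base φ).range :=
    ⟨⟨l.prod, hlC⟩, by
      rw [hprod, ← Monoid.PushoutI.of_apply_eq_base φ true]
      exact (hf true ⟨l.prod, amal.le_left hlC⟩).symm⟩
  rw [hw.eq_empty_of_mem_range hφ hbase] at hlen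
  exact List.eq_nil_of_length_eq_zero hlen.symm

end IsAmalgamatedFreeProduct

theorem exists_word_of_flatten {K : Type*} [Group K] (f : K →* G) {Z : Set K} {c : ℕ} :
    ∀ {Ws : List (List G)}, (∀ V ∈ Ws, ∃ l, IsWordOver Z l ∧ l.length ≤ c * V.length ∧
      f l.prod = V.prod) →
    ∃ l, IsWordOver Z l ∧ l.length ≤ c * Ws.flatten.length ∧ f l.prod = Ws.flatten.prod
  | [], _ => ⟨[], List.forall_mem_nil _, by simp, by simp⟩
  | V :: Ws, h => by
    rw [List.forall_mem_cons] at h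
    obtain ⟨l, hl, hlen, hprod⟩ := h.1
    obtain ⟨m, hm, hmlen, hmprod⟩ := exists_word_of_flatten f h.2
    refine ⟨l ++ m, List.forall_mem_append.2 ⟨hl, hm⟩, ?_, by simp [hprod, hmprod]⟩
    rw [List.flatten_cons, List.length_append, List.length_append, mul_add]
    exact add_le_add hlen hmlen

theorem mem_or_mem_not (i : Bool) {j : Bool} {x : G} (hx : x ∈ A j) : x ∈ A i ∨ x ∈ A (!i) := by
  cases i <;> cases j <;> simp [hx]

namespace IsReducedList

theorem take : ∀ {l : List G} {i : Bool} (n : ℕ), IsReducedList A C i l →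
    IsReducedList A C i (l.take n)
  | [], _, _, _ => by simp [IsReducedList]
  | _ :: _, _, 0, _ => trivial
  | _ :: _, _, n + 1, h => ⟨h.1, h.2.1, h.2.2.take n⟩

theorem exists_prod_take_inv_mul_mem : ∀ {l : List G} {i : Bool}, IsReducedList A C i l →
    ∀ {n : ℕ}, n < l.length → ∃ e, (l.take n).prod⁻¹ * (l.take (n + 1)).prod ∈ A e
  | _ :: _, i, hl, 0, _ => ⟨i, by simpa using hl.1⟩
  | _ :: _, _, hl, n + 1, hn => by
    obtain ⟨e, he⟩ := hl.2.2.exists_prod_take_inv_mul_mem (Nat.lt_of_succ_lt_succ hn)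
    exact ⟨e, by simpa [mul_assoc] using he⟩

theorem exists_mul_mem : ∀ {l : List G} {i j : Bool} {x : G}, IsReducedList A C i l → l ≠ [] →
    x ∈ A j → ∃ l', IsReducedList A C i l' ∧ l'.prod⁻¹ * (l.prod * x) ∈ C
  | [a], i, j, x, hl, _, hx => by
    rcases mem_or_mem_not i hx with hx | hx
    · by_cases h : a * x ∈ C
      · exact ⟨[], trivial, by simpa using h⟩
      · exact ⟨[a * x], ⟨mul_mem hl.1 hx, h, trivial⟩, by simp⟩
    · by_cases h : x ∈ C
      · exact ⟨[a], hl, by simpa using h⟩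
      · exact ⟨[a, x], ⟨hl.1, hl.2.1, hx, h, trivial⟩, by simp⟩
  | a :: b :: l, i, j, x, hl, _, hx => by
    obtain ⟨l', hl', h⟩ := exists_mul_mem hl.2.2 (List.cons_ne_nil b l) hx
    exact ⟨a :: l', ⟨hl.1, hl.2.1, hl'⟩, by simpa [mul_assoc] using h⟩

end IsReducedList

namespace HasNormalForm

variable (hA : HasNormalForm A C)
include hA

theorem exists_isReducedList (g : G) : ∃ i l, IsReducedList A C i l ∧ l.prod⁻¹ * g ∈ C := by
  obtain ⟨W, hW, rfl⟩ := hA.exists_list g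
  induction W using List.reverseRecOn with
  | nil => exact ⟨true, [], trivial, by simp⟩
  | append_singleton W x ih =>
    simp only [List.forall_mem_append, List.forall_mem_singleton] at hW
    obtain ⟨i, l, hl, h⟩ := ih hW.1
    obtain ⟨j, hx⟩ := hW.2
    rcases eq_or_ne l [] with rfl | hne
    · have hWx : W.prod * x ∈ A j := mul_mem (hA.le j (by simpa using h)) hx
      by_cases hc : W.prod * x ∈ C
      · exact ⟨true, [], trivial, by simpa using hc⟩
      · exact ⟨j, [W.prod * x], ⟨hWx, hc, trivial⟩, by simp⟩
    · obtain ⟨l', hl', h'⟩ := hl.exists_mul_mem hne (mul_mem (hA.le j h) hx)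
      exact ⟨i, l', hl', by simpa [mul_assoc] using h'⟩

theorem exists_prefix_mem {i : Bool} {a : G} {W : List G} (hW : ∀ x ∈ W, ∃ i, x ∈ A i)
    {l : List G} (hl : IsReducedList A C i (a :: l)) (h : (a :: l).prod⁻¹ * W.prod ∈ C) :
    ∃ n ≤ W.length, a⁻¹ * (W.take n).prod ∈ C := by
  induction W using List.reverseRecOn generalizing l with
  | nil =>
    have hnil := hA.eq_nil i (a :: l) hl (by simpa using inv_mem h)
    exact (List.cons_ne_nil a l hnil).elim
  | append_singleton W x ih =>
    simp only [List.forall_mem_append, List.forall_mem_singleton] at hW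
    rcases eq_or_ne l [] with rfl | hne
    · exact ⟨_, le_rfl, by rw [List.take_length]; simpa using h⟩
    · obtain ⟨j, hx⟩ := hW.2
      obtain ⟨l', hl', h'⟩ := hl.2.2.exists_mul_mem hne (mul_mem (hA.le j h) (inv_mem hx))
      obtain ⟨n, hnW, hn⟩ := ih hW.1 ⟨hl.1, hl.2.1, hl'⟩ (by simpa [mul_assoc] using h')
      exact ⟨n, by simp; omega, by rwa [List.take_append_of_le_length hnW]⟩

theorem prod_take_inv_mul_notMem : ∀ {l : List G} {i : Bool}, IsReducedList A C i l →
    ∀ {m n : ℕ}, m < n → n ≤ l.length → (l.take m).prod⁻¹ * (l.take n).prod ∉ C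
  | [], _, _, m, n, hmn, hn => by simp at hn; omega
  | a :: l, i, hl, 0, n, _, _ => fun h => by
    have := hA.eq_nil i _ (hl.take n) (by simpa using h)
    simp at this; omega
  | a :: l, i, hl, m + 1, n + 1, hmn, hn => by
    have := prod_take_inv_mul_notMem hl.2.2 (Nat.lt_of_succ_lt_succ hmn)
      (Nat.le_of_succ_le_succ hn)
    simpa [mul_assoc] using this

theorem exists_cut : ∀ {l : List G} {i : Bool}, IsReducedList A C i l → l ≠ [] →
    ∀ {W : List G}, (∀ x ∈ W, ∃ i, x ∈ A i) → l.prod⁻¹ * W.prod ∈ C →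
    ∃ n : ℕ → ℕ, Monotone n ∧ n 0 = 0 ∧ n l.length = W.length ∧
      ∀ j ≤ l.length, (l.take j).prod⁻¹ * (W.take (n j)).prod ∈ C
  | [a], _, _, _, W, _, h => by
    refine ⟨fun j => Nat.casesOn j 0 fun _ => W.length, ?_, rfl, rfl, ?_⟩
    · exact monotone_nat_of_le_succ (by rintro (_ | _) <;> simp)
    · rintro (_ | j) _
      · simp
      · simpa using h
  | a :: b :: l, i, hl, _, W, hW, h => by
    obtain ⟨m, hmW, hm⟩ := hA.exists_prefix_mem hW hl h
    set c := a⁻¹ * (W.take m).prod with hc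
    have htake : (W.take m).prod = a * c := (mul_inv_cancel_left _ _).symm
    have hprod : W.prod = a * c * (W.drop m).prod := by
      rw [← htake, List.prod_take_mul_prod_drop]
    have hl' : IsReducedList A C (!i) ((c⁻¹ * b) :: l) :=
      ⟨mul_mem (inv_mem (hA.le _ hm)) hl.2.2.1,
        fun hcb => hl.2.2.2.1 ((mul_mem_cancel_left (inv_mem hm)).1 hcb), hl.2.2.2.2⟩
    obtain ⟨n, hmono, hn0, hnl, hn⟩ := exists_cut hl' (List.cons_ne_nil _ _)
      (fun x hx => hW x (List.mem_of_mem_drop hx)) (by rw [hprod] at h; simpa [mul_assoc] using h)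
    refine ⟨fun j => Nat.casesOn j 0 fun j => m + n j, ?_, rfl, ?_, ?_⟩
    · refine monotone_nat_of_le_succ ?_
      rintro (_ | j)
      · exact Nat.zero_le _
      · exact Nat.add_le_add_left (hmono j.le_succ) m
    · change m + n (l.length + 1) = W.length
      rw [List.length_cons, List.length_drop] at hnl
      omega
    · rintro (_ | _ | j) hj
      · simp
      · simpa [hn0] using hm
      · simpa [List.take_add, htake, mul_assoc] using hn (j + 1) (Nat.le_of_succ_le_succ hj)

theorem exists_isSymmGen {X : Set G} (hX : IsSymmGen X) :
    ∃ Y : Set G, IsSymmGen Y ∧ ∀ y ∈ Y, ∃ i, y ∈ A i := by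
  choose w hwA hw using hA.exists_list
  have hgen : Subgroup.closure (⋃ x ∈ X, {y | y ∈ w x}) = ⊤ := by
    rw [eq_top_iff, ← hX.2.2, Subgroup.closure_le]
    intro x hx
    rw [← hw x]
    exact list_prod_mem fun y hy => Subgroup.subset_closure (Set.mem_biUnion hx hy)
  have hmem : ∀ y ∈ ⋃ x ∈ X, {y | y ∈ w x}, ∃ i, y ∈ A i := fun y hy =>
    let ⟨x, _, hy⟩ := Set.mem_iUnion₂.1 hy
    hwA x y hy
  refine ⟨_, isSymmGen_union_inv (hX.1.biUnion fun x _ => (w x).finite_toSet) hgen, ?_⟩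
  rintro y (hy | hy)
  · exact hmem y hy
  · obtain ⟨i, hi⟩ := hmem _ hy
    exact ⟨i, inv_mem_iff.1 hi⟩

theorem exists_flatten_eq (i : Bool) : ∀ {W : List G}, (∀ x ∈ W, ∃ i, x ∈ A i) → W.prod ∈ A i →
    ∃ Ws : List (List G), Ws.flatten = W ∧
      ∀ V ∈ Ws, (∃ x ∈ A i, V = [x]) ∨ V ≠ [] ∧ V.prod ∈ C
  | [], _, _ => ⟨[], rfl, by simp⟩
  | x :: W, hW, hprod => by
    rw [List.forall_mem_cons] at hW
    by_cases hx : x ∈ A i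
    · rw [List.prod_cons, mul_mem_cancel_left hx] at hprod
      obtain ⟨Ws, hWs, hmem⟩ := exists_flatten_eq i hW.2 hprod
      exact ⟨[x] :: Ws, by simp [hWs], List.forall_mem_cons.2 ⟨Or.inl ⟨x, hx, rfl⟩, hmem⟩⟩
    by_cases hC : (x :: W).prod ∈ C
    · exact ⟨[x :: W], by simp, by simpa using Or.inr hC⟩
    have hx' : x ∈ A (!i) :=
      let ⟨_, hj⟩ := hW.1
      (mem_or_mem_not i hj).resolve_left hx
    have hred : IsReducedList A C (!i) [x⁻¹, (x :: W).prod] :=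
      ⟨inv_mem hx', fun h => hx (hA.le i (inv_mem_iff.1 h)), by simpa using hprod, hC, trivial⟩
    obtain ⟨m, hmW, hm⟩ := hA.exists_prefix_mem hW.2 hred (by simp)
    have hU : (x :: W.take m).prod ∈ C := by simpa using hm
    have hsplit : x :: W = (x :: W.take m) ++ W.drop m := by simp
    rw [hsplit, List.prod_append, mul_mem_cancel_left (hA.le i hU)] at hprod
    obtain ⟨Ws, hWs, hmem⟩ := exists_flatten_eq i
      (fun y hy => hW.2 y (List.mem_of_mem_drop hy)) hprod
    exact ⟨(x :: W.take m) :: Ws, by simp [hWs],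
      List.forall_mem_cons.2 ⟨Or.inr ⟨List.cons_ne_nil _ _, hU⟩, hmem⟩⟩
  termination_by W => W.length
  decreasing_by all_goals simp; try omega

theorem exists_factor_word {X : Set G} {i : Bool} {Y : Set C} (hY : IsSymmGen Y) {K : ℕ}
    (hK : ∀ c, wordLength Y c ≤ K * wordLength X (c : G) + K) {V : List G} (hV : IsWordOver X V)
    (hVC : (∃ x ∈ A i, V = [x]) ∨ V ≠ [] ∧ V.prod ∈ C) :
    ∃ l, IsWordOver ((Subtype.val ⁻¹' X : Set (A i)) ∪ Subgroup.inclusion (hA.le i) '' Y) l ∧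
      l.length ≤ (2 * K + 1) * V.length ∧ (A i).subtype l.prod = V.prod := by
  rcases hVC with ⟨x, hx, rfl⟩ | ⟨hne, hVC⟩
  · exact ⟨[⟨x, hx⟩], List.forall_mem_singleton.2 (Or.inl (hV x List.mem_cons_self)), by simp,
      by simp⟩
  · obtain ⟨l, hl, hprod⟩ := hY.exists_isGeodesicWord ⟨V.prod, hVC⟩
    refine ⟨l.map (Subgroup.inclusion (hA.le i)), fun z hz => ?_, ?_, ?_⟩
    · obtain ⟨y, hy, rfl⟩ := List.mem_map.1 hz
      exact Or.inr ⟨y, hl.1 y hy, rfl⟩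
    · have hlen := hK ⟨V.prod, hVC⟩
      rw [← hprod, ← hl.2, hprod] at hlen
      have hpos := List.length_pos_iff.2 hne
      have hle := Nat.mul_le_mul_left K (wordLength_prod_le hV)
      rw [List.length_map]
      nlinarith
    · rw [← map_list_prod, hprod]; rfl

theorem isQuasiconvex_factor {X : Set G} (hX : IsSymmGen X) (hXA : ∀ x ∈ X, ∃ i, x ∈ A i)
    (hC : IsQuasiconvex C) (i : Bool) : IsQuasiconvex (A i) := by
  obtain ⟨Y, hY, K, hK⟩ := (isQuasiconvex_iff_isUndistorted hX).1 hC
  refine (isQuasiconvex_iff_isUndistorted hX).2 <| .of_words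
    ((hX.1.preimage Subtype.val_injective.injOn).union
      (hY.1.image (Subgroup.inclusion (hA.le i)))) (2 * K + 1) fun a => ?_
  obtain ⟨W, hW, hWa⟩ := hX.exists_isGeodesicWord (a : G)
  obtain ⟨Ws, rfl, hmem⟩ := hA.exists_flatten_eq i (fun x hx => hXA x (hW.1 x hx)) (hWa ▸ a.2)
  obtain ⟨l, hl, hlen, hprod⟩ := exists_word_of_flatten (A i).subtype fun V hV =>
    hA.exists_factor_word hY hK
      (fun x hx => hW.1 x (List.mem_flatten.2 ⟨V, hV, hx⟩)) (hmem V hV)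
  rw [hW.2, hWa] at hlen
  exact ⟨l, hl, hlen.trans (Nat.le_add_right _ _), Subtype.ext (hprod.trans hWa)⟩

end HasNormalForm

end NormalForm

/-! ### Chains in a group -/

section Chains

theorem IsGeodesicLength.le_sum_range {L : G → ℕ} (hL : IsGeodesicLength L) (f : ℕ → G) (k : ℕ) :
    L ((f 0)⁻¹ * f k) ≤ ∑ j ∈ Finset.range k, L ((f j)⁻¹ * f (j + 1)) := by
  induction k with
  | zero => simp [hL.one]
  | succ k ih =>
    rw [Finset.sum_range_succ]
    have hmul := hL.mul_le ((f 0)⁻¹ * f k) ((f k)⁻¹ * f (k + 1))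
    rw [show (f 0)⁻¹ * f k * ((f k)⁻¹ * f (k + 1)) = (f 0)⁻¹ * f (k + 1) by group] at hmul
    omega

theorem le_sum_window_or_forall {d w : ℕ → ℕ} {e : ℕ → Prop} {k : ℕ} (hk : d k = 0)
    (hd : ∀ j < k, d j ≤ w j ∨ e j ∧ d j ≤ w j + d (j + 1)) (n : ℕ) {j : ℕ} (hj : j ≤ k) :
    d j ≤ ∑ t ∈ Finset.range n, w (j + t) ∨ ∀ m < n, j + m < k ∧ e (j + m) := by
  induction n generalizing j with
  | zero => exact Or.inr fun m hm => (Nat.not_lt_zero m hm).elim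
  | succ n ih =>
    rcases hj.eq_or_lt with rfl | hj
    · exact Or.inl (hk ▸ Nat.zero_le _)
    rw [Finset.sum_range_succ']
    have hshift : ∀ t, w (j + (t + 1)) = w (j + 1 + t) := fun t => by rw [Nat.add_right_comm]; rfl
    simp only [hshift, add_zero]
    rcases hd j hj with hle | ⟨he, hle⟩
    · left; omega
    rcases ih (j := j + 1) hj with hsum | hrun
    · left; omega
    · right
      rintro (_ | m) hm
      · exact ⟨hj, he⟩
      · have := hrun m (by omega)
        rwa [add_assoc, add_comm 1 m] at this

theorem sum_range_add_le_sum_range {w : ℕ → ℕ} {k : ℕ} (hw : ∀ j ≥ k, w j = 0) (t : ℕ) :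
    ∑ j ∈ Finset.range k, w (j + t) ≤ ∑ j ∈ Finset.range k, w j := by
  have htail : ∑ j ∈ Finset.range t, w (k + j) = 0 :=
    Finset.sum_eq_zero fun j _ => hw _ (Nat.le_add_right k j)
  have h₁ := Finset.sum_range_add w t k
  have h₂ := Finset.sum_range_add w k t
  rw [add_comm t k] at h₁
  simp only [add_comm _ t]
  omega

theorem sum_range_le_of_chain {d w : ℕ → ℕ} {e : ℕ → Prop} {k N : ℕ} (hk : d k = 0)
    (hd : ∀ j < k, d j ≤ w j ∨ e j ∧ d j ≤ w j + d (j + 1))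
    (he : ∀ j, j + N ≤ k → ∃ m < N, ¬ e (j + m)) :
    ∑ j ∈ Finset.range k, d j ≤ N * ∑ j ∈ Finset.range k, w j := by
  let w' : ℕ → ℕ := fun j => if j < k then w j else 0
  have hw' : ∀ j < k, w' j = w j := fun j hj => if_pos hj
  have hwindow : ∀ j < k, d j ≤ ∑ t ∈ Finset.range N, w' (j + t) := fun j hj => by
    refine (le_sum_window_or_forall hk (fun j hj => hw' j hj ▸ hd j hj) N hj.le).resolve_right
      fun hrun => ?_
    have hjN : j + N ≤ k := by
      rcases N with _ | N
      · exact hj.le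
      · exact (hrun N N.lt_succ_self).1
    obtain ⟨m, hm, hme⟩ := he j hjN
    exact hme (hrun m hm).2
  calc ∑ j ∈ Finset.range k, d j
      ≤ ∑ j ∈ Finset.range k, ∑ t ∈ Finset.range N, w' (j + t) :=
        Finset.sum_le_sum fun j hj => hwindow j (Finset.mem_range.1 hj)
    _ = ∑ t ∈ Finset.range N, ∑ j ∈ Finset.range k, w' (j + t) := Finset.sum_comm
    _ ≤ ∑ _t ∈ Finset.range N, ∑ j ∈ Finset.range k, w' j :=
        Finset.sum_le_sum fun t _ => sum_range_add_le_sum_range (fun j hj => if_neg hj.not_gt) t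
    _ = N * ∑ j ∈ Finset.range k, w j := by
        rw [Finset.sum_const, Finset.card_range, smul_eq_mul,
          Finset.sum_congr rfl fun j hj => hw' j (Finset.mem_range.1 hj)]

/-- A chain which makes too many consecutive steps inside `E` visits some left coset of `C`
twice. -/
theorem exists_forall_exists_notMem_of_relIndex_ne_zero {C E : Subgroup G}
    (h : C.relIndex E ≠ 0) :
    ∃ N : ℕ, ∀ (p : ℕ → G) (k : ℕ), (∀ i j, i < j → j ≤ k → (p i)⁻¹ * p j ∉ C) →
      ∀ j, j + N ≤ k → ∃ m < N, (p (j + m))⁻¹ * p (j + m + 1) ∉ E := by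
  obtain ⟨F, hF, hEF⟩ := relIndex_ne_zero_iff.1 h
  refine ⟨hF.toFinset.card, fun p k hp j hj => ?_⟩
  by_contra! hstay
  have hE : ∀ m, m ≤ hF.toFinset.card → (p j)⁻¹ * p (j + m) ∈ E := fun m => by
    induction m with
    | zero => simp
    | succ m ih =>
      intro hm
      simpa [mul_assoc, ← add_assoc] using E.mul_mem (ih (by omega)) (hstay m hm)
  have hrepr : ∀ m ≤ hF.toFinset.card, ∃ f ∈ F, f⁻¹ * ((p j)⁻¹ * p (j + m)) ∈ C := fun m hm => by
    obtain ⟨f, hf, c, hc, hfc⟩ := hEF (hE m hm)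
    exact ⟨f, hf, by simpa [← show f * c = _ from hfc] using hc⟩
  choose! f hfF hfC using hrepr
  obtain ⟨m, hm, n, hn, hmn, hfmn⟩ := Finset.exists_ne_map_eq_of_card_lt_of_maps_to
    (s := Finset.range (hF.toFinset.card + 1)) (t := hF.toFinset) (f := f) (by simp)
    fun m hm => hF.mem_toFinset.2 (hfF m (Finset.mem_range_succ_iff.1 hm))
  rw [Finset.mem_range_succ_iff] at hm hn
  have hsame : ∀ m n, m ≤ hF.toFinset.card → n ≤ hF.toFinset.card → f m = f n →
      (p (j + m))⁻¹ * p (j + n) ∈ C := fun m n hm hn hfmn => by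
    have hmem := C.mul_mem (C.inv_mem (hfC m hm)) (hfC n hn)
    rw [hfmn] at hmem
    simpa [mul_assoc] using hmem
  rcases lt_or_gt_of_ne hmn with hlt | hlt
  · exact hp _ _ (by omega) (by omega) (hsame m n hm hn hfmn)
  · exact hp _ _ (by omega) (by omega) (hsame n m hn hm hfmn.symm)

end Chains

/-! ### Steps between conjugates of a factor -/

section DoubleCosets

variable {L : G → ℕ} {D : ℕ} {H B C E : Subgroup G}

theorem exists_mul_inv_mem_inf_conj_smul (H B : Subgroup G) (s s' : G) :
    ∃ h₀ ∈ H, ∀ h ∈ H, s⁻¹ * h * s' ∈ B → h * h₀⁻¹ ∈ H ⊓ MulAut.conj s • B := by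
  by_cases hex : ∃ h₀ ∈ H, s⁻¹ * h₀ * s' ∈ B
  · obtain ⟨h₀, hh₀, hB₀⟩ := hex
    refine ⟨h₀, hh₀, fun h hh hB => ⟨H.mul_mem hh (H.inv_mem hh₀), mem_conj_smul.2 ?_⟩⟩
    simpa [mul_assoc] using B.mul_mem hB (B.inv_mem hB₀)
  · exact ⟨1, H.one_mem, fun h hh hB => (hex ⟨h, hh, hB⟩).elim⟩

theorem IsUndistorted.exists_wordLength_le_of_le {P : Subgroup G} (hP : IsUndistorted L P)
    (hPH : P ≤ H) {Y : Set H} (hY : IsSymmGen Y) :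
    ∃ K, ∀ (h : H), (h : G) ∈ P → wordLength Y h ≤ K * L h + K := by
  obtain ⟨Z, hZ, c, hc⟩ := hP
  obtain ⟨M, hM⟩ := hZ.exists_le_mul_wordLength
    (ℓ := fun p => wordLength Y (Subgroup.inclusion hPH p)) (by simpa using wordLength_one Y)
    fun p q => by simpa using hY.wordLength_mul_le _ _
  refine ⟨M * c, fun h hh => (hM ⟨h, hh⟩).trans ?_⟩
  calc M * wordLength Z ⟨h, hh⟩ ≤ M * (c * L h + c) := Nat.mul_le_mul_left M (hc _)
    _ = M * c * L h + M * c := by ring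

theorem exists_wordLength_le_of_mul_mul_mem (hL : IsGeodesicLength L) {Y : Set H}
    (hY : IsSymmGen Y) (s s' : G) (hP : IsUndistorted L (H ⊓ MulAut.conj s • B)) :
    ∃ K, ∀ h : H, s⁻¹ * h * s' ∈ B → wordLength Y h ≤ K * L (s⁻¹ * h * s') + K := by
  obtain ⟨h₀, hh₀, hmem⟩ := exists_mul_inv_mem_inf_conj_smul H B s s'
  obtain ⟨K, hK⟩ := hP.exists_wordLength_le_of_le inf_le_left hY
  refine ⟨K * (L s + L s' + L h₀ + 1) + wordLength Y ⟨h₀, hh₀⟩, fun h hB => ?_⟩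
  have hsplit := hY.wordLength_mul_le (h * ⟨h₀, hh₀⟩⁻¹) ⟨h₀, hh₀⟩
  rw [inv_mul_cancel_right] at hsplit
  have hlen : L (h * h₀⁻¹) ≤ L (s⁻¹ * h * s') + (L s + L s' + L h₀) := by
    have h₁ := hL.mul_le (s * (s⁻¹ * h * s') * s'⁻¹) h₀⁻¹
    have h₂ := hL.mul_le (s * (s⁻¹ * h * s')) s'⁻¹
    have h₃ := hL.mul_le s (s⁻¹ * h * s')
    rw [show s * (s⁻¹ * (h : G) * s') * s'⁻¹ = h by group] at h₁ h₂
    rw [hL.inv] at h₁ h₂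
    omega
  have hquot : wordLength Y (h * ⟨h₀, hh₀⟩⁻¹) ≤ K * L (h * h₀⁻¹) + K := hK _ (hmem h h.2 hB)
  nlinarith [Nat.mul_le_mul_left K hlen, Nat.zero_le (K * (L s + L s' + L h₀)),
    Nat.zero_le ((K * (L s + L s' + L h₀) + wordLength Y ⟨h₀, hh₀⟩) * L (s⁻¹ * h * s'))]

theorem IsHyperbolicLength.exists_le_or_le (hL : IsHyperbolicLength L D)
    (hC : IsGeodesicallyQuasiconvex L C) (hE : IsElementaryHull C E) (s s' : G)
    (hP : IsUndistorted L (H ⊓ MulAut.conj s • B))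
    (hfin : ((C ⊓ MulAut.conj s⁻¹ • H : Subgroup G) : Set G).Finite) :
    ∃ K, ∀ h ∈ H, s⁻¹ * h * s' ∈ B → s⁻¹ * h * s' ∈ E ∧ L (s⁻¹ * h * s') ≤ K ∨
      ∀ c ∈ C, ∀ c' ∈ C, L c ≤ L (c⁻¹ * (s⁻¹ * h * s') * c') + K := by
  obtain ⟨h₀, -, hmem⟩ := exists_mul_inv_mem_inf_conj_smul H B s s'
  set P := MulAut.conj s⁻¹ • (H ⊓ MulAut.conj s • B)
  have hPqc : IsGeodesicallyQuasiconvex L P :=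
    hL.isUndistorted_iff.1 (hP.conj_smul hL.toIsGeodesicLength s⁻¹)
  have hCP : ((C ⊓ P : Subgroup G) : Set G).Finite := hfin.subset fun x hx =>
    ⟨hx.1, mem_conj_smul.2 (mem_conj_smul.1 hx.2).1⟩
  obtain ⟨K₁, hK₁⟩ := hE.exists_le_of_mem hCP L (s⁻¹ * h₀ * s')
  obtain ⟨K₂, hK₂⟩ := hL.exists_le_of_notMem_elementaryHull hC hE hPqc hCP (s⁻¹ * h₀ * s')
  refine ⟨K₁ + K₂, fun h hh hB => ?_⟩
  have hp : s⁻¹ * (h * h₀⁻¹) * s ∈ P :=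
    mem_conj_smul.2 (by simpa [mul_assoc] using hmem h hh hB)
  have hpr : s⁻¹ * (h * h₀⁻¹) * s * (s⁻¹ * h₀ * s') = s⁻¹ * h * s' := by group
  by_cases hhE : s⁻¹ * h * s' ∈ E
  · have hle := hK₁ _ hp (hpr ▸ hhE)
    rw [hpr] at hle
    exact Or.inl ⟨hhE, hle.trans (Nat.le_add_right _ _)⟩
  · refine Or.inr fun c hc c' hc' => ?_
    have hle := hK₂ _ hp (hpr ▸ hhE) c hc c' hc'
    rw [hpr] at hle
    exact hle.trans (by omega)

end DoubleCosets

section Factorizations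

variable {L : G → ℕ} {D : ℕ} {C E : Subgroup G} {S : Set G}

/-- `x = a * s * c` with `a ∈ H`, `s ∈ S` and `c ∈ C`, where `c` has length at most `b` if `C` has
infinite intersection with `s⁻¹ * H * s`; in that case `c` could be shortened by moving an element
of the intersection over to `a`. -/
structure IsTightFactorization (L : G → ℕ) (C : Subgroup G) (S : Set G) (b : ℕ) {H : Subgroup G}
    (x : G) (a : H) (s c : G) : Prop where
  left_mem : s ∈ S
  right_mem : c ∈ C
  eq : x = a * s * c
  le : ((C ⊓ MulAut.conj s⁻¹ • H : Subgroup G) : Set G).Infinite → L c ≤ b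

theorem exists_forall_mem_of_monotone {ι : Type*} {S : Set ι} (hS : S.Finite) {p : ι → ℕ → Prop}
    (hp : ∀ i, Monotone (p i)) (h : ∀ i ∈ S, ∃ n, p i n) : ∃ n, ∀ i ∈ S, p i n :=
  ((Filter.eventually_all_finite hS (l := Filter.atTop)).2 fun i hi =>
    let ⟨n, hn⟩ := h i hi
    (Filter.eventually_ge_atTop n).mono fun _ hm => hp i hm hn).exists

theorem exists_forall_exists_le_of_relIndex_ne_zero {Q : Subgroup G} (hQC : Q ≤ C)
    (h : Q.relIndex C ≠ 0) (L : G → ℕ) :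
    ∃ b, ∀ c ∈ C, ∃ c' ∈ C, L c' ≤ b ∧ c * c'⁻¹ ∈ Q := by
  obtain ⟨F, hF, hCF⟩ := relIndex_ne_zero_iff.1 h
  obtain ⟨b, hb⟩ := (hF.image fun f => L f⁻¹).bddAbove
  refine ⟨b, fun c hc => ?_⟩
  obtain ⟨f, hf, q, hq, hfq⟩ := hCF (C.inv_mem hc)
  obtain rfl : c = q⁻¹ * f⁻¹ := by rw [← mul_inv_rev, show f * q = c⁻¹ from hfq, inv_inv]
  exact ⟨f⁻¹, by simpa using C.mul_mem (hQC hq) hc, hb ⟨f, hf, rfl⟩, by simpa using hq⟩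

theorem exists_isTightFactorization (H : Subgroup G) (hS : S.Finite) {z : G}
    (hz : (Subgroup.zpowers z).relIndex C ≠ 0) (L : G → ℕ) :
    ∃ b, ∀ a : H, ∀ s ∈ S, ∀ c ∈ C, ∃ (a' : H) (c' : G),
      IsTightFactorization L C S b (a * s * c) a' s c' := by
  obtain ⟨b, hb⟩ := exists_forall_mem_of_monotone hS
    (p := fun s b => ((C ⊓ MulAut.conj s⁻¹ • H : Subgroup G) : Set G).Infinite →
      ∀ c ∈ C, ∃ c' ∈ C, L c' ≤ b ∧ c * c'⁻¹ ∈ C ⊓ MulAut.conj s⁻¹ • H)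
    (fun s m n hmn h hinf c hc =>
      let ⟨c', hc', hle, hmem⟩ := h hinf c hc
      ⟨c', hc', hle.trans hmn, hmem⟩) fun s _ => by
    by_cases hinf : ((C ⊓ MulAut.conj s⁻¹ • H : Subgroup G) : Set G).Infinite
    · obtain ⟨b, hb⟩ := exists_forall_exists_le_of_relIndex_ne_zero inf_le_left
        (relIndex_ne_zero_of_infinite hz inf_le_left hinf) L
      exact ⟨b, fun _ => hb⟩
    · exact ⟨0, fun h => (hinf h).elim⟩
  refine ⟨b, fun a s hs c hc => ?_⟩
  by_cases hinf : ((C ⊓ MulAut.conj s⁻¹ • H : Subgroup G) : Set G).Infinite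
  · obtain ⟨c', hc', hle, -, hmem⟩ := hb s hs hinf c hc
    have hconj : s * (c * c'⁻¹) * s⁻¹ ∈ H := by simpa using mem_conj_smul.1 hmem
    exact ⟨a * ⟨_, hconj⟩, c', hs, hc', by simp [mul_assoc], fun _ => hle⟩
  · exact ⟨a, c, hs, hc, rfl, fun h => (hinf h).elim⟩

section Steps

variable {A : Bool → Subgroup G} {H : Subgroup G} {b : ℕ} {x x' s s' c c' : G} {a a' : H}

theorem IsTightFactorization.inv_mul_mul (hx : IsTightFactorization L C S b x a s c)
    (hx' : IsTightFactorization L C S b x' a' s' c') :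
    s⁻¹ * (a⁻¹ * a' : H) * s' = c * (x⁻¹ * x') * c'⁻¹ := by
  rw [hx.eq, hx'.eq]
  push_cast
  group

theorem IsTightFactorization.inv_mul_mul_mem (hx : IsTightFactorization L C S b x a s c)
    (hx' : IsTightFactorization L C S b x' a' s' c') {B : Subgroup G} (hCB : C ≤ B) :
    s⁻¹ * (a⁻¹ * a' : H) * s' ∈ B ↔ x⁻¹ * x' ∈ B := by
  rw [hx.inv_mul_mul hx', B.mul_mem_cancel_right (B.inv_mem (hCB hx'.right_mem)),
    B.mul_mem_cancel_left (hCB hx.right_mem)]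

theorem exists_wordLength_le_of_isTightFactorization (hL : IsGeodesicLength L)
    (hCA : ∀ i, C ≤ A i) {Y : Set H} (hY : IsSymmGen Y) (hS : S.Finite)
    (hP : ∀ (g : G) i, IsUndistorted L (H ⊓ MulAut.conj g • A i)) :
    ∃ K, ∀ {b : ℕ} {x x' s s' c c' : G} {a a' : H}, IsTightFactorization L C S b x a s c →
      IsTightFactorization L C S b x' a' s' c' → (∃ i, x⁻¹ * x' ∈ A i) →
      wordLength Y (a⁻¹ * a') ≤ K * (L c + L (x⁻¹ * x') + L c' + 1) := by
  obtain ⟨K, hK⟩ := exists_forall_mem_of_monotone (hS.prod (hS.prod Set.finite_univ))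
    (p := fun t K => ∀ h : H, t.1⁻¹ * h * t.2.1 ∈ A t.2.2 →
      wordLength Y h ≤ K * L (t.1⁻¹ * h * t.2.1) + K)
    (fun t m n hmn hm h hB => (hm h hB).trans (by gcongr))
    fun t _ => exists_wordLength_le_of_mul_mul_mem hL hY t.1 t.2.1 (hP t.1 t.2.2)
  refine ⟨K, fun {b x x' s s' c c' a a'} hx hx' ⟨i, hi⟩ => ?_⟩
  calc wordLength Y (a⁻¹ * a') ≤ K * L (s⁻¹ * (a⁻¹ * a' : H) * s') + K :=
        hK (s, s', i) ⟨hx.left_mem, hx'.left_mem, trivial⟩ _ ((hx.inv_mul_mul_mem hx' (hCA i)).2 hi)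
    _ ≤ K * (L c + L (x⁻¹ * x') + L c') + K := by
        rw [hx.inv_mul_mul hx', ← hL.inv c']
        have h₁ := hL.mul_le (c * (x⁻¹ * x')) c'⁻¹
        have h₂ := hL.mul_le c (x⁻¹ * x')
        gcongr
        omega
    _ = K * (L c + L (x⁻¹ * x') + L c' + 1) := by ring

theorem IsHyperbolicLength.exists_le_or_le_of_isTightFactorization (hL : IsHyperbolicLength L D)
    (hC : IsGeodesicallyQuasiconvex L C) (hE : IsElementaryHull C E) (hCA : ∀ i, C ≤ A i)
    (hS : S.Finite) (hP : ∀ (g : G) i, IsUndistorted L (H ⊓ MulAut.conj g • A i)) (b : ℕ) :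
    ∃ K, ∀ {x x' s s' c c' : G} {a a' : H}, IsTightFactorization L C S b x a s c →
      IsTightFactorization L C S b x' a' s' c' → (∃ i, x⁻¹ * x' ∈ A i) →
      L c ≤ L (x⁻¹ * x') + K ∨ x⁻¹ * x' ∈ E ∧ L c ≤ L (x⁻¹ * x') + K + L c' := by
  obtain ⟨K, hK⟩ := exists_forall_mem_of_monotone (hS.prod (hS.prod Set.finite_univ))
    (p := fun t K => ((C ⊓ MulAut.conj t.1⁻¹ • H : Subgroup G) : Set G).Finite →
      ∀ h ∈ H, t.1⁻¹ * h * t.2.1 ∈ A t.2.2 →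
        t.1⁻¹ * h * t.2.1 ∈ E ∧ L (t.1⁻¹ * h * t.2.1) ≤ K ∨
        ∀ c ∈ C, ∀ c' ∈ C, L c ≤ L (c⁻¹ * (t.1⁻¹ * h * t.2.1) * c') + K)
    (fun t m n hmn hm hf h hh hB => (hm hf h hh hB).imp (And.imp_right (le_trans · hmn))
      fun hle c hc c' hc' => (hle c hc c' hc').trans (by gcongr))
    fun t _ => by
      by_cases hf : ((C ⊓ MulAut.conj t.1⁻¹ • H : Subgroup G) : Set G).Finite
      · obtain ⟨K, hK⟩ := hL.exists_le_or_le hC hE t.1 t.2.1 (hP t.1 t.2.2) hf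
        exact ⟨K, fun _ => hK⟩
      · exact ⟨0, fun h => (hf h).elim⟩
  refine ⟨K + b, fun {x x' s s' c c' a a'} hx hx' ⟨i, hi⟩ => ?_⟩
  by_cases hf : ((C ⊓ MulAut.conj s⁻¹ • H : Subgroup G) : Set G).Finite
  · rcases hK (s, s', i) ⟨hx.left_mem, hx'.left_mem, trivial⟩ hf _ (a⁻¹ * a').2
      ((hx.inv_mul_mul_mem hx' (hCA i)).2 hi) with ⟨hE', hle⟩ | hle
    · refine Or.inr ⟨(hx.inv_mul_mul_mem hx' hE.le).1 hE', ?_⟩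
      have h₁ := hL.mul_le (c * (x⁻¹ * x') * c'⁻¹) (c' * (x⁻¹ * x')⁻¹)
      have h₂ := hL.mul_le c' (x⁻¹ * x')⁻¹
      rw [show c * (x⁻¹ * x') * c'⁻¹ * (c' * (x⁻¹ * x')⁻¹) = c by group,
        ← hx.inv_mul_mul hx'] at h₁
      rw [hL.inv] at h₂
      dsimp only at hle
      omega
    · have hle := hle c hx.right_mem c' hx'.right_mem
      dsimp only at hle
      rw [hx.inv_mul_mul hx', show c⁻¹ * (c * (x⁻¹ * x') * c'⁻¹) * c' = x⁻¹ * x' by group] at hle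
      left; omega
  · have := hx.le hf
    left; omega

end Steps

end Factorizations

/-! ### The criterion -/

section Chains

variable {A : Bool → Subgroup G} {C : Subgroup G}

theorem inv_mul_mem_iff_of_inv_mul_mem {B : Subgroup G} (hCB : C ≤ B) {g g' x x' : G}
    (hx : g⁻¹ * x ∈ C) (hx' : g'⁻¹ * x' ∈ C) : x⁻¹ * x' ∈ B ↔ g⁻¹ * g' ∈ B := by
  rw [show x⁻¹ * x' = (g⁻¹ * x)⁻¹ * (g⁻¹ * g') * (g'⁻¹ * x') by group,
    B.mul_mem_cancel_right (hCB hx'), B.mul_mem_cancel_left (B.inv_mem (hCB hx))]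

theorem HasNormalForm.inv_mul_notMem (hA : HasNormalForm A C) {i : Bool} {l : List G}
    (hl : IsReducedList A C i l) {p : ℕ → G} (hp : ∀ j ≤ l.length, (l.take j).prod⁻¹ * p j ∈ C)
    {m n : ℕ} (hmn : m < n) (hn : n ≤ l.length) : (p m)⁻¹ * p n ∉ C := by
  rw [inv_mul_mem_iff_of_inv_mul_mem le_rfl (hp m (hmn.le.trans hn)) (hp n hn)]
  exact hA.prod_take_inv_mul_notMem hl hmn hn

theorem HasNormalForm.exists_inv_mul_mem (hA : HasNormalForm A C) {i : Bool} {l : List G}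
    (hl : IsReducedList A C i l) {p : ℕ → G} (hp : ∀ j ≤ l.length, (l.take j).prod⁻¹ * p j ∈ C)
    {j : ℕ} (hj : j < l.length) : ∃ e, (p j)⁻¹ * p (j + 1) ∈ A e := by
  obtain ⟨e, he⟩ := hl.exists_prod_take_inv_mul_mem hj
  exact ⟨e, (inv_mul_mem_iff_of_inv_mul_mem (hA.le e) (hp j hj.le) (hp (j + 1) hj)).2 he⟩

theorem HasNormalForm.exists_chain (hA : HasNormalForm A C) {X : Set G} (hX : IsSymmGen X)
    (hXA : ∀ x ∈ X, ∃ i, x ∈ A i) {i : Bool} {l : List G} (hl : IsReducedList A C i l)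
    (hne : l ≠ []) {g : G} (hlg : l.prod⁻¹ * g ∈ C) :
    ∃ p : ℕ → G, p 0 = 1 ∧ p l.length = g ∧ (∀ j ≤ l.length, (l.take j).prod⁻¹ * p j ∈ C) ∧
      ∑ j ∈ Finset.range l.length, wordLength X ((p j)⁻¹ * p (j + 1)) ≤ wordLength X g := by
  obtain ⟨W, hW, rfl⟩ := hX.exists_isGeodesicWord g
  obtain ⟨n, hmono, hn0, hnl, hn⟩ := hA.exists_cut hl hne (fun x hx => hXA x (hW.1 x hx)) hlg
  refine ⟨fun j => (W.take (n j)).prod, by simp [hn0], by simp [hnl], hn, ?_⟩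
  have hstep : ∀ j, wordLength X ((W.take (n j)).prod⁻¹ * (W.take (n (j + 1))).prod) ≤
      n (j + 1) - n j := fun j => by
    have hsplit : W.take (n (j + 1)) = W.take (n j) ++ (W.drop (n j)).take (n (j + 1) - n j) := by
      rw [← List.take_add, Nat.add_sub_cancel' (hmono j.le_succ)]
    rw [hsplit, List.prod_append, inv_mul_cancel_left]
    exact (wordLength_prod_le fun x hx =>
      hW.1 x (List.mem_of_mem_drop (List.mem_of_mem_take hx))).trans (List.length_take_le _ _)
  calc ∑ j ∈ Finset.range l.length,
        wordLength X ((W.take (n j)).prod⁻¹ * (W.take (n (j + 1))).prod)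
    _ ≤ ∑ j ∈ Finset.range l.length, (n (j + 1) - n j) := Finset.sum_le_sum fun j _ => hstep j
    _ = wordLength X W.prod := by rw [Finset.sum_range_tsub hmono, hn0, hnl, Nat.sub_zero, hW.2]

end Chains

section Subgroup

variable {A : Bool → Subgroup G} {C H : Subgroup G} {L : G → ℕ} {D : ℕ} {X : Set G} {Y : Set H}

theorem IsSymmGen.exists_finite_forall_take (hX : IsSymmGen X) (hY : IsSymmGen Y) :
    ∃ S : Set G, S.Finite ∧ ∀ h : H, ∃ W, IsWordOver X W ∧ W.prod = h ∧
      ∀ n, ∃ a : H, ∃ s ∈ S, (W.take n).prod = a * s := by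
  choose w hw hwprod using hX.exists_isGeodesicWord
  refine ⟨{1} ∪ ⋃ y ∈ Y, {x | x ∈ (w y).inits.map List.prod},
    (Set.finite_singleton 1).union (hY.1.biUnion fun y _ => List.finite_toSet _), fun h => ?_⟩
  obtain ⟨V, hV, rfl⟩ := hY.exists_isGeodesicWord h
  replace hV := hV.1
  induction V with
  | nil => exact ⟨[], by simp [IsWordOver], rfl, fun n => ⟨1, 1, Or.inl rfl, by simp⟩⟩
  | cons y V ih =>
    obtain ⟨W, hW, hWprod, htake⟩ := ih fun y hy => hV y (List.mem_cons_of_mem _ hy)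
    refine ⟨w y ++ W, List.forall_mem_append.2 ⟨(hw y).1, hW⟩, by simp [hwprod, hWprod],
      fun n => ?_⟩
    rcases le_total n (w y).length with hn | hn
    · refine ⟨1, ((w y).take n).prod, Or.inr (Set.mem_biUnion (hV y List.mem_cons_self) ?_), ?_⟩
      · exact List.mem_map_of_mem ((List.mem_inits _ _).2 (List.take_prefix n _))
      · rw [List.take_append_of_le_length hn, Subgroup.coe_one, one_mul]
    · obtain ⟨a, s, hs, has⟩ := htake (n - (w y).length)
      refine ⟨y * a, s, hs, ?_⟩
      rw [List.take_append, List.take_of_length_le hn, List.prod_append, hwprod, has,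
        Subgroup.coe_mul, mul_assoc]

theorem IsTightFactorization.of_mem {S : Set G} (hL : IsGeodesicLength L) (hS : 1 ∈ S) {b : ℕ}
    {x : G} (hx : x ∈ H) : IsTightFactorization L C S b x ⟨x, hx⟩ 1 1 where
  left_mem := hS
  right_mem := C.one_mem
  eq := by simp
  le _ := by simp [hL.one]

theorem HasNormalForm.exists_forall_isTightFactorization (hA : HasNormalForm A C)
    (hL : IsGeodesicLength L) (hX : IsSymmGen X) (hXA : ∀ x ∈ X, ∃ i, x ∈ A i)
    (hY : IsSymmGen Y) {z : G} (hz : (Subgroup.zpowers z).relIndex C ≠ 0) :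
    ∃ S : Set G, S.Finite ∧ ∃ b, ∀ (h : H) {i : Bool} {l : List G}, IsReducedList A C i l →
      l ≠ [] → l.prod⁻¹ * h ∈ C → ∀ j ≤ l.length, ∀ x, (l.take j).prod⁻¹ * x ∈ C →
      ∃ (a : H) (s c : G), IsTightFactorization L C S b x a s c ∧
        ∀ hx : x ∈ H, a = ⟨x, hx⟩ ∧ c = 1 := by
  obtain ⟨S, hS, htake⟩ := hX.exists_finite_forall_take hY
  obtain ⟨b, hb⟩ := exists_isTightFactorization H (hS.insert 1) hz L
  refine ⟨insert 1 S, hS.insert 1, b, fun h i l hl hne hlh j hj x hx => ?_⟩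
  by_cases hxH : x ∈ H
  · exact ⟨⟨x, hxH⟩, 1, 1, .of_mem hL (Set.mem_insert 1 S) hxH, fun _ => ⟨rfl, rfl⟩⟩
  obtain ⟨W, hW, hWh, hWS⟩ := htake h
  obtain ⟨n, -, -, -, hn⟩ := hA.exists_cut hl hne (fun x hx => hXA x (hW x hx)) (hWh ▸ hlh)
  obtain ⟨a, s, hs, has⟩ := hWS (n j)
  have hc : (a * s)⁻¹ * x ∈ C := by
    rw [← has, inv_mul_mem_iff_of_inv_mul_mem le_rfl (hn j hj) hx, inv_mul_cancel]
    exact C.one_mem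
  obtain ⟨a', c', hfac⟩ := hb a s (Set.mem_insert_of_mem 1 hs) _ hc
  rw [mul_inv_cancel_left] at hfac
  exact ⟨a', s, c', hfac, fun hx => (hxH hx).elim⟩

theorem sum_range_le_mul_sum_of_chain {v d w : ℕ → ℕ} {e : ℕ → Prop} {k N K K' : ℕ}
    (hk : d k = 0) (hw : ∀ j < k, 1 ≤ w j)
    (hv : ∀ j < k, v j ≤ K * (d j + w j + d (j + 1) + 1))
    (hd : ∀ j < k, d j ≤ w j + K' ∨ e j ∧ d j ≤ w j + K' + d (j + 1))
    (he : ∀ j, j + N ≤ k → ∃ m < N, ¬ e (j + m)) :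
    ∑ j ∈ Finset.range k, v j ≤ K * (2 * (N * (K' + 1)) + 2) * ∑ j ∈ Finset.range k, w j := by
  have hdw : ∑ j ∈ Finset.range k, d j ≤ N * ((K' + 1) * ∑ j ∈ Finset.range k, w j) := by
    rw [Finset.mul_sum]
    refine sum_range_le_of_chain hk (fun j hj => ?_) he
    have hle : w j + K' ≤ (K' + 1) * w j := by nlinarith [hw j hj]
    exact (hd j hj).imp hle.trans' (And.imp_right (by omega))
  have hshift : ∑ j ∈ Finset.range k, d (j + 1) ≤ ∑ j ∈ Finset.range k, d j := by
    have := Finset.sum_range_succ d k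
    have := Finset.sum_range_succ' d k
    omega
  calc ∑ j ∈ Finset.range k, v j
    _ ≤ ∑ j ∈ Finset.range k, K * (d j + w j + d (j + 1) + w j) :=
        Finset.sum_le_sum fun j hj => by
          have hj := Finset.mem_range.1 hj
          exact (hv j hj).trans (by gcongr; exact hw j hj)
    _ = K * (∑ j ∈ Finset.range k, d j + ∑ j ∈ Finset.range k, d (j + 1) +
          2 * ∑ j ∈ Finset.range k, w j) := by
        rw [← Finset.mul_sum]; simp only [Finset.sum_add_distrib]; ring
    _ ≤ K * (2 * (N * ((K' + 1) * ∑ j ∈ Finset.range k, w j)) +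
          2 * ∑ j ∈ Finset.range k, w j) := by
        gcongr; omega
    _ = K * (2 * (N * (K' + 1)) + 2) * ∑ j ∈ Finset.range k, w j := by ring

theorem HasNormalForm.exists_wordLength_le_mul_sum (hA : HasNormalForm A C)
    (hL : IsHyperbolicLength L D) (hX : IsSymmGen X) (hXA : ∀ x ∈ X, ∃ i, x ∈ A i)
    (hY : IsSymmGen Y) {z : G} (hz : (Subgroup.zpowers z).relIndex C ≠ 0)
    (hC : IsGeodesicallyQuasiconvex L C)
    (hP : ∀ (g : G) i, IsUndistorted L (H ⊓ MulAut.conj g • A i)) :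
    ∃ K, ∀ (h : H) {i : Bool} {l : List G} {p : ℕ → G}, IsReducedList A C i l → l ≠ [] →
      (∀ j ≤ l.length, (l.take j).prod⁻¹ * p j ∈ C) → p 0 = 1 → p l.length = h →
      wordLength Y h ≤ K * ∑ j ∈ Finset.range l.length, L ((p j)⁻¹ * p (j + 1)) := by
  obtain ⟨E, hE⟩ := hL.exists_isElementaryHull hz hC
  obtain ⟨N, hN⟩ := exists_forall_exists_notMem_of_relIndex_ne_zero hE.relIndex_ne_zero
  obtain ⟨S, hS, b, hfac⟩ :=
    hA.exists_forall_isTightFactorization hL.toIsGeodesicLength hX hXA hY hz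
  obtain ⟨K, hK⟩ :=
    exists_wordLength_le_of_isTightFactorization hL.toIsGeodesicLength hA.le hY hS hP
  obtain ⟨K', hK'⟩ := hL.exists_le_or_le_of_isTightFactorization hC hE hA.le hS hP b
  refine ⟨K * (2 * (N * (K' + 1)) + 2), fun h i l p hl hne hp hp0 hpl => ?_⟩
  have hlh : l.prod⁻¹ * h ∈ C := by simpa [hpl] using hp l.length le_rfl
  have hnot : ∀ i j, i < j → j ≤ l.length → (p i)⁻¹ * p j ∉ C := fun _ _ => hA.inv_mul_notMem hl hp
  have hmem : ∀ j < l.length, ∃ e, (p j)⁻¹ * p (j + 1) ∈ A e := fun _ => hA.exists_inv_mul_mem hl hp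
  choose! a s c htight hend using fun j hj => hfac h hl hne hlh j hj (p j) (hp j hj)
  have ha0 : a 0 = 1 := by
    have hmem0 : p 0 ∈ H := hp0 ▸ H.one_mem
    exact (hend 0 (Nat.zero_le _) hmem0).1.trans (Subtype.ext hp0)
  obtain ⟨hal, hcl⟩ : a l.length = h ∧ c l.length = 1 := by
    have hmeml : p l.length ∈ H := hpl ▸ h.2
    simpa [hpl] using hend l.length le_rfl hmeml
  have hY0 := hY.isGeodesicLength.le_sum_range a l.length
  rw [ha0, hal, inv_one, one_mul] at hY0
  refine hY0.trans (sum_range_le_mul_sum_of_chain (d := fun j => L (c j))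
    (e := fun j => (p j)⁻¹ * p (j + 1) ∈ E) (by simp [hcl, hL.one]) (fun j hj => ?_)
    (fun j hj => hK (htight j hj.le) (htight (j + 1) hj) (hmem j hj))
    (fun j hj => hK' (htight j hj.le) (htight (j + 1) hj) (hmem j hj)) (hN p l.length hnot))
  rw [Nat.one_le_iff_ne_zero, ne_eq, hL.eq_zero_iff]
  exact fun h1 => hnot j (j + 1) j.lt_succ_self hj (h1 ▸ C.one_mem)

theorem HasNormalForm.isUndistorted_of_inf_conj_smul (hA : HasNormalForm A C)
    (hL : IsHyperbolicLength L D) (hX : IsSymmGen X) (hXA : ∀ x ∈ X, ∃ i, x ∈ A i) {M : ℕ}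
    (hXL : ∀ g, wordLength X g ≤ M * L g) {z : G} (hz : (Subgroup.zpowers z).relIndex C ≠ 0)
    (hC : IsGeodesicallyQuasiconvex L C) (hH : H.FG)
    (hP : ∀ (g : G) i, IsUndistorted L (H ⊓ MulAut.conj g • A i)) : IsUndistorted L H := by
  obtain ⟨Y, hY⟩ := exists_isSymmGen_of_fg ((Group.fg_iff_subgroup_fg H).2 hH)
  obtain ⟨K, hK⟩ := hA.exists_wordLength_le_mul_sum hL hX hXA hY hz hC hP
  obtain ⟨K', hK'⟩ := (hP 1 true).exists_wordLength_le_of_le inf_le_left hY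
  obtain ⟨M', hM'⟩ := hX.exists_le_mul_wordLength hL.one hL.mul_le
  refine ⟨Y, hY, K * (M' * M) + K', fun h => ?_⟩
  obtain ⟨i, l, hl, hlh⟩ := hA.exists_isReducedList (h : G)
  rcases eq_or_ne l [] with rfl | hne
  · have hhC : (h : G) ∈ C := by simpa using hlh
    exact (hK' h ⟨h.2, mem_conj_smul.2 (by simpa using hA.le true hhC)⟩).trans
      (by gcongr <;> omega)
  obtain ⟨p, hp0, hpl, hp, hsum⟩ := hA.exists_chain hX hXA hl hne hlh
  calc wordLength Y h
    _ ≤ K * ∑ j ∈ Finset.range l.length, L ((p j)⁻¹ * p (j + 1)) := hK h hl hne hp hp0 hpl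
    _ ≤ K * ∑ j ∈ Finset.range l.length, M' * wordLength X ((p j)⁻¹ * p (j + 1)) := by
        gcongr; exact hM' _
    _ ≤ K * (M' * (M * L h)) := by
        rw [← Finset.mul_sum]; gcongr; exact hsum.trans (hXL h)
    _ ≤ (K * (M' * M) + K') * L h + (K * (M' * M) + K') := by
        nlinarith [Nat.zero_le (K' * L h), Nat.zero_le (K * (M' * M) + K')]

end Subgroup

section Criterion

theorem IsGeodesicLength.isQuasiconvex_subgroupOf_iff {L : G → ℕ} (hL : IsGeodesicLength L)
    {P B : Subgroup G} (hPB : P ≤ B) (hB : IsUndistorted L B) :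
    IsQuasiconvex (P.subgroupOf B) ↔ IsUndistorted L P := by
  obtain ⟨X, hX, c, hc⟩ := hB
  rw [isQuasiconvex_iff_isUndistorted hX]
  constructor
  · intro h
    exact h.of_surjective (f := (Subgroup.subgroupOfEquivOfLe hPB).toMonoidHom)
      (Subgroup.subgroupOfEquivOfLe hPB).surjective fun p => hc p
  · intro h
    obtain ⟨M, hM⟩ := hX.exists_le_mul_wordLength (ℓ := fun b : B => L b) hL.one
      fun b b' => hL.mul_le b b'
    exact h.of_surjective (f := (Subgroup.subgroupOfEquivOfLe hPB).symm.toMonoidHom)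
      (Subgroup.subgroupOfEquivOfLe hPB).symm.surjective (c := M)
      fun p => (hM ⟨p, hPB p.2⟩).trans (Nat.le_add_right _ _)

theorem conj_smul_conj_inv_smul_inf (g : G) (H B : Subgroup G) :
    MulAut.conj g • (MulAut.conj g⁻¹ • H ⊓ B) = H ⊓ MulAut.conj g • B := by
  rw [Subgroup.smul_inf, smul_smul, ← map_mul, mul_inv_cancel, map_one, one_smul]

end Criterion

end

/-- **Theorem B.** Quasiconvexity criterion for subgroups of an amalgam of hyperbolic
groups along a virtually cyclic subgroup. -/
theorem quasiconvex_iff_conj_inter_quasiconvex {G : Type u} [Group G]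
    (A : Bool → Subgroup G) (C : Subgroup G)
    (hG : IsWordHyperbolic G)
    (amal : IsAmalgamatedFreeProduct (A true) (A false) C)
    (hC : IsVirtuallyCyclic ↥C)
    (H : Subgroup G) (hH : H.FG) :
    IsQuasiconvex H ↔
      ∀ (g : G) (i : Bool),
        IsQuasiconvex ((H.map (MulAut.conj g⁻¹).toMonoidHom ⊓ A i).subgroupOf (A i)) := by
  obtain ⟨X₀, hX₀, δ, -, hδ⟩ := hG
  obtain ⟨D, hL⟩ := hX₀.exists_isHyperbolicLength hδ
  have hA := amal.hasNormalForm
  obtain ⟨X, hX, hXA⟩ := hA.exists_isSymmGen hX₀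
  obtain ⟨z, hzC, hz⟩ := hC.exists_zpowers
  have hCu : IsUndistorted (wordLength X₀) C := (hL.isUndistorted_zpowers z).of_relIndex_ne_zero
    hL.toIsGeodesicLength (Subgroup.zpowers_le.2 hzC) hz
  have hAu (i) : IsUndistorted (wordLength X₀) (A i) := (isQuasiconvex_iff_isUndistorted hX₀).1
    (hA.isQuasiconvex_factor hX hXA ((isQuasiconvex_iff_isUndistorted hX₀).2 hCu) i)
  rw [isQuasiconvex_iff_isUndistorted hX₀]
  refine Iff.trans ?_
    (forall₂_congr fun g i => (hL.isQuasiconvex_subgroupOf_iff inf_le_right (hAu i)).symm)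
  constructor
  · intro hHu g i
    rw [hL.isUndistorted_iff]
    exact (hL.isUndistorted_iff.1 (hHu.conj_smul hL.toIsGeodesicLength g⁻¹)).inf
      hL.toIsGeodesicLength (hL.isUndistorted_iff.1 (hAu i))
  · intro hconj
    obtain ⟨M, hM⟩ := hX₀.exists_le_mul_wordLength (wordLength_one X) hX.wordLength_mul_le
    refine hA.isUndistorted_of_inf_conj_smul hL hX hXA hM hz (hL.isUndistorted_iff.1 hCu) hH
      fun g i => ?_
    rw [← conj_smul_conj_inv_smul_inf]
    exact (hconj g i).conj_smul hL.toIsGeodesicLength g
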